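/- arXiv:1801.05121 — 7 statements merged into one kernel-verified Lean document; each statement's English description precedes it below -/
import Mathlib

section
/- Let Q = (Q_i)_{i≥1} be a generator-stationary random element of S. Then E[Q_1] = nλ, and for every integer i ≥ 2, E[Q_i] = nλ · P(Q_1 = ⋯ = Q_{i−1} = n). -/
open MeasureTheory

/-- Membership in the state space `S`: coordinates are at most `n`, the sequence is
non-increasing, and only finitely many coordinates are non-zero (finite total mass).
Here `q i` represents the paper's `Q_{i+1}`. -/
def InS (n : ℕ) (q : ℕ → ℕ) : Prop :=
  (∀ i, q i ≤ n) ∧ (∀ i, q (i + 1) ≤ q i) ∧ (Function.support q).Finite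

/-- The JSQ generator `G_Q` acting on a test function `f`.  The index `j` corresponds to
the paper's index `i = j + 1`; for `j = 0` the condition `∀ k < 0, q k = n` is vacuous, so
the first summand is the paper's `n λ 1(q_1 < n)(f(q+e^{(1)}) - f(q))` term, and the
summands `j ≥ 1` are the paper's arrival terms for `i ≥ 2`.  The second sum contains the
departure terms. -/
noncomputable def jsqGen (n : ℕ) (lam : ℝ) (f : (ℕ → ℕ) → ℝ) (q : ℕ → ℕ) : ℝ :=
  (∑' j : ℕ, (n * lam) * (if (∀ k < j, q k = n) ∧ q j < n then (1 : ℝ) else 0) *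
      (f (Function.update q j (q j + 1)) - f q)) +
  ∑' j : ℕ, ((q j : ℝ) - (q (j + 1) : ℝ)) * (f (Function.update q j (q j - 1)) - f q)

/-- A random element `Q` of `S` is generator-stationary if for every test function `f`
with `E|f(Q)| < ∞`, the expectation `E[G_Q f(Q)]` is well defined and equals `0`. -/
def GeneratorStationary {Ωp : Type*} [MeasurableSpace Ωp] (μ : Measure Ωp)
    (n : ℕ) (lam : ℝ) (Q : Ωp → ℕ → ℕ) : Prop :=
  ∀ f : (ℕ → ℕ) → ℝ, Integrable (fun ω => f (Q ω)) μ →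
    Integrable (fun ω => jsqGen n lam f (Q ω)) μ ∧
      (∫ ω, jsqGen n lam f (Q ω) ∂μ) = 0

/-!
Testing stationarity against the number `∑_{i ≥ j} q i` of customers in positions `≥ j` would give
the result at once, since the generator maps it to minus its net outflow
`q j - n λ 1(q 0 = ⋯ = q (j - 1) = n)`. That tail sum is not known to be integrable, however, so
one tests against the bounded function `q j` instead. The generator maps it to a difference of
consecutive net outflows, so the expected net outflow does not depend on `j`. On a state of finite
total mass the net outflow vanishes for large `j`, so by dominated convergence its expectation is
zero.
-/

open Filter Function Topology

/-- The states in which each of the first `j` coordinates has its maximal value `n`, so that an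
arriving customer takes position `j` or higher (positions being counted from `0`). -/
def saturated (n j : ℕ) : Set (ℕ → ℕ) := {q | ∀ k < j, q k = n}

/-- The rate at which the number of customers in positions `≥ j` decreases in state `q`: the
departure rates `q i - q (i + 1)` from these positions telescope to `q j`, and arrivals join them
at rate `n * lam` exactly when `q` is saturated below `j`. -/
noncomputable def netOutflow (n : ℕ) (lam : ℝ) (j : ℕ) (q : ℕ → ℕ) : ℝ :=
  q j - n * lam * (saturated n j).indicator 1 q

section Generator

variable {n j : ℕ} {q : ℕ → ℕ}

lemma mem_saturated_succ : q ∈ saturated n (j + 1) ↔ q ∈ saturated n j ∧ q j = n :=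
  Nat.forall_lt_succ_right

lemma measurableSet_saturated (n j : ℕ) : MeasurableSet (saturated n j) := by
  have h : saturated n j = ⋂ k < j, (fun q : ℕ → ℕ ↦ q k) ⁻¹' {n} := by
    ext q
    simp [saturated]
  rw [h]
  exact .iInter fun k ↦ .iInter fun _ ↦ measurable_pi_apply k (measurableSet_singleton n)

lemma jsqGen_comp_eval (n : ℕ) (lam : ℝ) (g : ℕ → ℝ) (j : ℕ) (q : ℕ → ℕ) :
    jsqGen n lam (fun p ↦ g (p j)) q =
      n * lam * (if (∀ k < j, q k = n) ∧ q j < n then 1 else 0) * (g (q j + 1) - g (q j)) +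
        ((q j : ℝ) - q (j + 1)) * (g (q j - 1) - g (q j)) := by
  rw [jsqGen, tsum_eq_single j, tsum_eq_single j]
  · simp only [update_self]
  all_goals
    intro i hij
    simp only [update_of_ne hij.symm, sub_self, mul_zero]

lemma ite_saturated_lt_eq_indicator_sub (hq : q j ≤ n) :
    (if (∀ k < j, q k = n) ∧ q j < n then (1 : ℝ) else 0) =
      (saturated n j).indicator 1 q - (saturated n (j + 1)).indicator 1 q := by
  have hcond : ((∀ k < j, q k = n) ∧ q j < n) ↔ q ∈ saturated n j ∧ q j ≠ n :=
    and_congr_right fun _ ↦ hq.lt_iff_ne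
  classical
  simp only [hcond, Set.indicator_apply, mem_saturated_succ, Pi.one_apply]
  by_cases hsat : q ∈ saturated n j <;> by_cases hj : q j = n <;> simp [hsat, hj]

lemma sub_mul_natCast_pred_sub (h : q (j + 1) ≤ q j) :
    ((q j : ℝ) - q (j + 1)) * ((q j - 1 : ℕ) - (q j : ℝ)) = q (j + 1) - q j := by
  rcases Nat.eq_zero_or_pos (q j) with hj | hj
  · simp [hj, Nat.le_zero.mp (hj ▸ h)]
  · rw [Nat.cast_pred hj]
    ring

lemma jsqGen_eval (lam : ℝ) (hle : q j ≤ n) (hanti : q (j + 1) ≤ q j) :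
    jsqGen n lam (fun p ↦ (p j : ℝ)) q = netOutflow n lam (j + 1) q - netOutflow n lam j q := by
  rw [jsqGen_comp_eval n lam (fun m ↦ (m : ℝ)), sub_mul_natCast_pred_sub hanti,
    ite_saturated_lt_eq_indicator_sub hle, netOutflow, netOutflow]
  push_cast
  ring

lemma norm_netOutflow_le (lam : ℝ) (hle : q j ≤ n) :
    ‖netOutflow n lam j q‖ ≤ n + ‖n * lam‖ := by
  have hind : ‖(saturated n j).indicator (1 : (ℕ → ℕ) → ℝ) q‖ ≤ 1 :=
    (norm_indicator_le_norm_self _ _).trans (by simp)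
  calc ‖netOutflow n lam j q‖
      ≤ ‖(q j : ℝ)‖ + ‖n * lam * (saturated n j).indicator 1 q‖ := norm_sub_le _ _
    _ ≤ n + ‖n * lam‖ := by
      gcongr
      · simpa using hle
      · rw [norm_mul]
        exact mul_le_of_le_one_right (norm_nonneg _) hind

lemma eventually_netOutflow_eq_zero (n : ℕ) (lam : ℝ) (hq : (support q).Finite) :
    ∀ᶠ j in atTop, netOutflow n lam j q = 0 := by
  have hzero : ∀ᶠ j in atTop, q j = 0 := by
    rw [← Nat.cofinite_eq_atTop]
    simpa using hq.eventually_cofinite_notMem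
  obtain ⟨N, hN⟩ := eventually_atTop.mp hzero
  filter_upwards [eventually_gt_atTop N] with j hj
  by_cases hsat : q ∈ saturated n j
  · have hn : n = 0 := (hsat N hj).symm.trans (hN N le_rfl)
    simp [netOutflow, hN j hj.le, hn]
  · simp [netOutflow, hN j hj.le, hsat]

end Generator

section Expectation

variable {Ω : Type*} [MeasurableSpace Ω] {μ : Measure Ω} [IsFiniteMeasure μ] {n : ℕ}
  {Q : Ω → ℕ → ℕ}

lemma integrable_natCast_eval {j : ℕ} (hQ : AEMeasurable Q μ) (hle : ∀ᵐ ω ∂μ, Q ω j ≤ n) :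
    Integrable (fun ω ↦ (Q ω j : ℝ)) μ := by
  have hmeas : Measurable fun q : ℕ → ℕ ↦ (q j : ℝ) :=
    measurable_from_top.comp (measurable_pi_apply j)
  refine .of_bound (hmeas.comp_aemeasurable hQ).aestronglyMeasurable n ?_
  filter_upwards [hle] with ω hω
  simpa using hω

lemma integrable_indicator_saturated (n j : ℕ) (hQ : AEMeasurable Q μ) :
    Integrable (fun ω ↦ (saturated n j).indicator (1 : (ℕ → ℕ) → ℝ) (Q ω)) μ :=
  (integrable_const (1 : ℝ)).indicator₀ (hQ.nullMeasurable (measurableSet_saturated n j))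

lemma integrable_netOutflow {j : ℕ} (lam : ℝ) (hQ : AEMeasurable Q μ)
    (hle : ∀ᵐ ω ∂μ, Q ω j ≤ n) : Integrable (fun ω ↦ netOutflow n lam j (Q ω)) μ :=
  (integrable_natCast_eval hQ hle).sub ((integrable_indicator_saturated n j hQ).const_mul _)

lemma integral_netOutflow {j : ℕ} (lam : ℝ) (hQ : AEMeasurable Q μ)
    (hle : ∀ᵐ ω ∂μ, Q ω j ≤ n) :
    ∫ ω, netOutflow n lam j (Q ω) ∂μ =
      ∫ ω, (Q ω j : ℝ) ∂μ - n * lam * μ.real {ω | ∀ k < j, Q ω k = n} := by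
  have hind : ∫ ω, (saturated n j).indicator (1 : (ℕ → ℕ) → ℝ) (Q ω) ∂μ =
      μ.real (Q ⁻¹' saturated n j) :=
    (integral_indicator₀ (hQ.nullMeasurable (measurableSet_saturated n j))).trans (by simp)
  simp only [netOutflow]
  rw [integral_sub (integrable_natCast_eval hQ hle)
    ((integrable_indicator_saturated n j hQ).const_mul _), integral_const_mul, hind]
  rfl

lemma tendsto_integral_netOutflow (lam : ℝ) (hQ : AEMeasurable Q μ)
    (hle : ∀ᵐ ω ∂μ, ∀ j, Q ω j ≤ n) (hfin : ∀ᵐ ω ∂μ, (support (Q ω)).Finite) :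
    Tendsto (fun j ↦ ∫ ω, netOutflow n lam j (Q ω) ∂μ) atTop (𝓝 0) := by
  have hle_eval := ae_all_iff.mp hle
  rw [← integral_zero Ω ℝ (μ := μ)]
  refine tendsto_integral_of_dominated_convergence (fun _ ↦ n + ‖n * lam‖)
    (fun j ↦ (integrable_netOutflow lam hQ (hle_eval j)).aestronglyMeasurable)
    (integrable_const _) (fun j ↦ ?_) ?_
  · filter_upwards [hle_eval j] with ω hω using norm_netOutflow_le lam hω
  · filter_upwards [hfin] with ω hω
    exact tendsto_const_nhds.congr' (EventuallyEq.symm (eventually_netOutflow_eq_zero n lam hω))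

lemma integral_netOutflow_succ {j : ℕ} (lam : ℝ) (hQ : AEMeasurable Q μ)
    (hS : ∀ᵐ ω ∂μ, InS n (Q ω))
    (hstat : ∫ ω, jsqGen n lam (fun q ↦ (q j : ℝ)) (Q ω) ∂μ = 0) :
    ∫ ω, netOutflow n lam (j + 1) (Q ω) ∂μ = ∫ ω, netOutflow n lam j (Q ω) ∂μ := by
  have hint (i : ℕ) : Integrable (fun ω ↦ netOutflow n lam i (Q ω)) μ :=
    integrable_netOutflow lam hQ (hS.mono fun _ hω ↦ hω.1 i)
  have hgen : (fun ω ↦ jsqGen n lam (fun q ↦ (q j : ℝ)) (Q ω)) =ᵐ[μ]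
      fun ω ↦ netOutflow n lam (j + 1) (Q ω) - netOutflow n lam j (Q ω) :=
    hS.mono fun _ hω ↦ jsqGen_eval lam (hω.1 j) (hω.2.1 j)
  rwa [integral_congr_ae hgen, integral_sub (hint _) (hint _), sub_eq_zero] at hstat

theorem stmt0_general (lam : ℝ) (hQ : AEMeasurable Q μ) (hS : ∀ᵐ ω ∂μ, InS n (Q ω))
    (hstat : ∀ j, ∫ ω, jsqGen n lam (fun q ↦ (q j : ℝ)) (Q ω) ∂μ = 0) (j : ℕ) :
    ∫ ω, (Q ω j : ℝ) ∂μ = n * lam * μ.real {ω | ∀ k < j, Q ω k = n} := by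
  have hconst (i : ℕ) : ∫ ω, netOutflow n lam i (Q ω) ∂μ = ∫ ω, netOutflow n lam 0 (Q ω) ∂μ := by
    induction i with
    | zero => rfl
    | succ i ih => rw [integral_netOutflow_succ lam hQ hS (hstat i), ih]
  have hlim := tendsto_integral_netOutflow lam hQ (hS.mono fun _ hω ↦ hω.1)
    (hS.mono fun _ hω ↦ hω.2.2)
  have hzero : ∫ ω, netOutflow n lam j (Q ω) ∂μ = 0 := by
    simp only [hconst] at hlim ⊢
    exact tendsto_nhds_unique tendsto_const_nhds hlim
  rwa [integral_netOutflow lam hQ (hS.mono fun _ hω ↦ hω.1 j), sub_eq_zero] at hzero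

end Expectation

/-- for a generator-stationary `Q`, `E[Q_1] = n λ` and, for every `i ≥ 2`,
`E[Q_i] = n λ · P(Q_1 = ⋯ = Q_{i-1} = n)`.  With the `0`-indexed `Q` used here
(`Q ω j` is the paper's `Q_{j+1}`), this reads: `E[Q ω 0] = n λ` and for every `j ≥ 1`,
`E[Q ω j] = n λ · P(∀ k < j, Q ω k = n)`. -/
theorem stmt0 {Ωp : Type*} [MeasurableSpace Ωp] (μ : Measure Ωp)
    [IsProbabilityMeasure μ] (n : ℕ) (hn : 1 ≤ n) (lam : ℝ) (hlam : 0 < lam)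
    (Q : Ωp → ℕ → ℕ) (hQmeas : Measurable Q) (hQS : ∀ ω, InS n (Q ω))
    (hstat : GeneratorStationary μ n lam Q) :
    (∫ ω, (Q ω 0 : ℝ) ∂μ) = n * lam ∧
      ∀ j : ℕ, 1 ≤ j →
        (∫ ω, (Q ω j : ℝ) ∂μ) =
          n * lam * (μ {ω | ∀ k < j, Q ω k = n}).toReal := by
  have hmean := stmt0_general lam hQmeas.aemeasurable (ae_of_all μ hQS) fun j ↦
    (hstat _ (integrable_natCast_eval hQmeas.aemeasurable (ae_of_all μ fun ω ↦ (hQS ω).1 j))).2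
  exact ⟨by simpa using hmean 0, fun j _ ↦ hmean j⟩
end

section
/- Let Q be a generator-stationary random element of S and set X_2 = Q_2/n. Then for every κ > β: E[(X_2 − κ/√n)·1(X_2 ≥ κ/√n)] ≤ (1/(β√n))·(12 + 6κ/(κ − β))·P(X_2 ≥ κ/√n − 1/n), and consequently E[√n·X_2] ≤ 2κ + (1/β)·(12 + 6κ/(κ − β)). -/
open MeasureTheory

/-!
Write `x, b, c` for the first three coordinates, `a = n - x` for the number of idle servers,
`V b = (b - K)⁺` and `δ = n (1 - λ)`. The generator applied to `∑_{i ≤ b} V i - a V b` produces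
`-δ V b`, up to the boundary term `n 1(b ≥ K - 1)` and two error terms. The error
`V n (c - n λ 1(b = n))` has non-positive mean, as the generator applied to the number of customers
in positions `≥ 3` shows: these only arrive when the first two positions are full. The error
`a (V b + b 1(b > K))` is absorbed by the generator applied to `a² 1(b > K)`, which contains the
drift `-2 a (b - δ)`, because `b ≤ K / (K - δ) * (b - δ)` when `b > K > δ`.
-/

section Generator

variable {n : ℕ} {lam K : ℝ} {q : ℕ → ℕ}

lemma jsqGen_eq_sum_of_dependsOn {f : (ℕ → ℕ) → ℝ} {m : ℕ} (hf : DependsOn f (Set.Iio m)) :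
    jsqGen n lam f q =
      (∑ j ∈ Finset.range m, (n * lam) * (if (∀ k < j, q k = n) ∧ q j < n then (1 : ℝ) else 0) *
        (f (Function.update q j (q j + 1)) - f q)) +
      ∑ j ∈ Finset.range m,
        ((q j : ℝ) - (q (j + 1) : ℝ)) * (f (Function.update q j (q j - 1)) - f q) := by
  have update_eq : ∀ j ∉ Finset.range m, ∀ y, f (Function.update q j y) = f q := by
    intro j hj y
    refine hf fun i hi => Function.update_of_ne (fun hij => hj ?_) _ _
    exact hij ▸ Finset.mem_range.2 hi
  unfold jsqGen
  congr 1 <;> refine tsum_eq_sum fun j hj => ?_ <;> rw [update_eq j hj, sub_self, mul_zero]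

/-- The number of customers in the positions `k, …, k + m - 1` (counted from `0`): a test function
depending on finitely many coordinates that approximates the number of customers in all positions
from `k` on. -/
noncomputable def tailMass (k m : ℕ) (q : ℕ → ℕ) : ℝ := ∑ i ∈ Finset.range m, (q (k + i) : ℝ)

lemma dependsOn_tailMass (k m : ℕ) : DependsOn (tailMass k m) (Set.Iio (k + m)) := by
  intro q q' h
  refine Finset.sum_congr rfl fun i hi => ?_
  rw [h (k + i) (Nat.add_lt_add_left (Finset.mem_range.1 hi) k)]

lemma tailMass_update_of_lt {k j : ℕ} (m : ℕ) (hj : j < k) (y : ℕ) :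
    tailMass k m (Function.update q j y) = tailMass k m q :=
  Finset.sum_congr rfl fun i _ => by rw [Function.update_of_ne (by omega)]

lemma tailMass_update_sub {m l : ℕ} (k : ℕ) (hl : l < m) (y : ℕ) :
    tailMass k m (Function.update q (k + l) y) - tailMass k m q = (y : ℝ) - q (k + l) := by
  unfold tailMass
  rw [← Finset.sum_sub_distrib, Finset.sum_eq_single_of_mem l (Finset.mem_range.2 hl)]
  · rw [Function.update_self]
  · intro i _ hi
    rw [Function.update_of_ne (by omega), sub_self]

lemma sum_first_not_full_le (n k m : ℕ) (q : ℕ → ℕ) :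
    ∑ l ∈ Finset.range m, (if (∀ i < k + 1 + l, q i = n) ∧ q (k + 1 + l) < n then (1 : ℝ) else 0) ≤
      if q k = n then 1 else 0 := by
  split_ifs with hk
  · rw [Finset.sum_boole, Nat.cast_le_one, Finset.card_le_one]
    simp only [Finset.mem_filter]
    rintro i ⟨-, hi, hi'⟩ j ⟨-, hj, hj'⟩
    by_contra hij
    rcases Nat.lt_or_gt_of_ne hij with h | h
    · exact hi'.ne (hj _ (by omega))
    · exact hj'.ne (hi _ (by omega))
  · refine (Finset.sum_eq_zero fun l _ => if_neg fun h => hk (h.1 k (by omega))).le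

lemma sub_mul_natCast_pred_sub_s1 {b c : ℕ} (hcb : c ≤ b) :
    ((b : ℝ) - c) * (((b - 1 : ℕ) : ℝ) - b) = c - b := by
  rcases Nat.eq_zero_or_pos b with rfl | hpos
  · rw [Nat.eq_zero_of_le_zero hcb]
    simp
  · rw [Nat.cast_pred hpos]
    ring

lemma jsqGen_tailMass_le (hlam : 0 ≤ lam) (hq : InS n q) (k m : ℕ) :
    jsqGen n lam (tailMass (k + 1) m) q ≤
      n * lam * (if q k = n then 1 else 0) - q (k + 1) + q (k + 1 + m) := by
  rw [jsqGen_eq_sum_of_dependsOn (dependsOn_tailMass (k + 1) m),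
    Finset.sum_range_add _ (k + 1) m, Finset.sum_range_add _ (k + 1) m]
  have head_eq_zero : ∀ c : ℕ → ℝ, ∀ y : ℕ → ℕ, ∑ j ∈ Finset.range (k + 1), c j *
      (tailMass (k + 1) m (Function.update q j (y j)) - tailMass (k + 1) m q) = 0 := by
    refine fun c y => Finset.sum_eq_zero fun j hj => ?_
    rw [tailMass_update_of_lt m (Finset.mem_range.1 hj), sub_self, mul_zero]
  have arrivals : ∑ l ∈ Finset.range m, (n * lam) *
      (if (∀ i < k + 1 + l, q i = n) ∧ q (k + 1 + l) < n then (1 : ℝ) else 0) *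
      (tailMass (k + 1) m (Function.update q (k + 1 + l) (q (k + 1 + l) + 1)) -
        tailMass (k + 1) m q) ≤ n * lam * (if q k = n then 1 else 0) := by
    refine le_of_eq_of_le ?_ (mul_le_mul_of_nonneg_left (sum_first_not_full_le n k m q)
      (by positivity : (0 : ℝ) ≤ n * lam))
    rw [Finset.mul_sum]
    refine Finset.sum_congr rfl fun l hl => ?_
    rw [tailMass_update_sub _ (Finset.mem_range.1 hl), Nat.cast_add_one, add_sub_cancel_left,
      mul_one]
  have departures : ∑ l ∈ Finset.range m, ((q (k + 1 + l) : ℝ) - q (k + 1 + l + 1)) *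
      (tailMass (k + 1) m (Function.update q (k + 1 + l) (q (k + 1 + l) - 1)) -
        tailMass (k + 1) m q) = q (k + 1 + m) - q (k + 1) := by
    rw [← Finset.sum_range_sub (fun l => (q (k + 1 + l) : ℝ)) m]
    refine Finset.sum_congr rfl fun l hl => ?_
    rw [tailMass_update_sub _ (Finset.mem_range.1 hl), sub_mul_natCast_pred_sub_s1 (hq.2.1 _)]
    rfl
  rw [head_eq_zero, head_eq_zero, departures]
  linarith

lemma dependsOn_fst_snd (h : ℕ → ℕ → ℝ) :
    DependsOn (fun q : ℕ → ℕ => h (q 0) (q 1)) (Set.Iio 2) := by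
  intro q q' hqq'
  simp only [hqq' 0 (Set.mem_Iio.2 two_pos), hqq' 1 (Set.mem_Iio.2 one_lt_two)]

lemma jsqGen_fst_snd (h : ℕ → ℕ → ℝ) :
    jsqGen n lam (fun q => h (q 0) (q 1)) q =
      n * lam * (if q 0 < n then 1 else 0) * (h (q 0 + 1) (q 1) - h (q 0) (q 1)) +
      n * lam * (if q 0 = n ∧ q 1 < n then 1 else 0) * (h (q 0) (q 1 + 1) - h (q 0) (q 1)) +
      ((q 0 : ℝ) - q 1) * (h (q 0 - 1) (q 1) - h (q 0) (q 1)) +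
      ((q 1 : ℝ) - q 2) * (h (q 0) (q 1 - 1) - h (q 0) (q 1)) := by
  rw [jsqGen_eq_sum_of_dependsOn (dependsOn_fst_snd h)]
  simp only [Finset.sum_range_succ, Finset.sum_range_zero, Nat.not_lt_zero, IsEmpty.forall_iff,
    implies_true, true_and, Nat.lt_one_iff, forall_eq, Function.update_self, Function.update_of_ne,
    ne_eq, one_ne_zero, zero_ne_one, not_false_eq_true, zero_add, Nat.reduceAdd]
  ring

lemma sub_mul_ite_le_eq_posPart (x t : ℝ) :
    (x - t) * (if t ≤ x then 1 else 0) = (x - t)⁺ := by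
  split_ifs with h
  · rw [mul_one, posPart_of_nonneg (sub_nonneg.2 h)]
  · rw [mul_zero, posPart_of_nonpos (sub_nonpos.2 (not_le.1 h).le)]

lemma posPart_succ_sub_le (K : ℝ) (b : ℕ) :
    (((b + 1 : ℕ) : ℝ) - K)⁺ ≤ ((b : ℝ) - K)⁺ + if K - 1 ≤ b then 1 else 0 := by
  have := le_posPart ((b : ℝ) - K)
  have := posPart_nonneg ((b : ℝ) - K)
  push_cast
  split_ifs with h <;> exact sup_le (by linarith) (by linarith)

lemma posPart_sub_sub_posPart_pred_le (K : ℝ) (b : ℕ) :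
    ((b : ℝ) - K)⁺ - (((b - 1 : ℕ) : ℝ) - K)⁺ ≤ if K < b then 1 else 0 := by
  have hpred : (b : ℝ) ≤ ((b - 1 : ℕ) : ℝ) + 1 := by exact_mod_cast Nat.le_succ_of_pred_le le_rfl
  have := le_posPart (((b - 1 : ℕ) : ℝ) - K)
  have := posPart_nonneg (((b - 1 : ℕ) : ℝ) - K)
  split_ifs with h
  · rw [posPart_of_nonneg (by linarith : 0 ≤ (b : ℝ) - K)]
    linarith
  · rw [posPart_of_nonpos (by linarith : (b : ℝ) - K ≤ 0)]
    linarith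

/-- A discrete antiderivative of `b ↦ (b - K)⁺`, used to build the test function `excessTest`. -/
noncomputable def cumulExcess (K : ℝ) (b : ℕ) : ℝ := ∑ i ∈ Finset.range (b + 1), ((i : ℝ) - K)⁺

lemma cumulExcess_succ (K : ℝ) (b : ℕ) :
    cumulExcess K (b + 1) = cumulExcess K b + (((b + 1 : ℕ) : ℝ) - K)⁺ :=
  Finset.sum_range_succ _ _

/-- The test function with drift `-n (1 - lam) (b - K)⁺` up to error terms, in terms of the first
two coordinates `x`, `b` of the state. -/
noncomputable def excessTest (n : ℕ) (K : ℝ) (x b : ℕ) : ℝ :=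
  cumulExcess K b - ((n : ℝ) - x) * ((b : ℝ) - K)⁺

lemma excessTest_succ_left_sub (n : ℕ) (K : ℝ) (x b : ℕ) :
    excessTest n K (x + 1) b - excessTest n K x b = ((b : ℝ) - K)⁺ := by
  simp only [excessTest, Nat.cast_add_one]
  ring

lemma excessTest_succ_right_sub (n : ℕ) (K : ℝ) (b : ℕ) :
    excessTest n K n (b + 1) - excessTest n K n b = (((b + 1 : ℕ) : ℝ) - K)⁺ := by
  simp only [excessTest, cumulExcess_succ]
  ring

lemma excessTest_arrivals_le {x b : ℕ} (hlam : 0 ≤ lam) (hbx : b ≤ x) (hxn : x ≤ n) :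
    n * lam * (if x < n then 1 else 0) * (excessTest n K (x + 1) b - excessTest n K x b) +
        n * lam * (if x = n ∧ b < n then 1 else 0) *
          (excessTest n K x (b + 1) - excessTest n K x b) ≤
      n * lam * (((b : ℝ) - K)⁺ + (if K - 1 ≤ b then 1 else 0) -
        ((n : ℝ) - K)⁺ * if b = n then 1 else 0) := by
  rw [mul_assoc, mul_assoc (n * lam), ← mul_add]
  refine mul_le_mul_of_nonneg_left ?_ (by positivity)
  have near_nonneg : (0 : ℝ) ≤ if K - 1 ≤ (b : ℝ) then 1 else 0 := by split_ifs <;> simp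
  rcases hxn.lt_or_eq with hx | rfl
  · rw [excessTest_succ_left_sub]
    simp only [hx, hx.ne, (hbx.trans_lt hx).ne, false_and, if_true, if_false]
    linarith
  · rcases hbx.lt_or_eq with hb | rfl
    · rw [excessTest_succ_right_sub]
      simp only [hb, hb.ne, lt_irrefl, and_self, if_true, if_false]
      linarith [posPart_succ_sub_le K b]
    · simp only [lt_irrefl, and_false, if_true, if_false]
      linarith

lemma excessTest_pred_right_sub_le {x b : ℕ} (hb : 0 < b) (hxn : x ≤ n) :
    excessTest n K x (b - 1) - excessTest n K x b ≤
      -((b : ℝ) - K)⁺ + ((n : ℝ) - x) * if K < b then 1 else 0 := by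
  obtain ⟨b, rfl⟩ := Nat.exists_eq_add_one.2 hb
  have hstep := mul_le_mul_of_nonneg_left (posPart_sub_sub_posPart_pred_le K (b + 1))
    (sub_nonneg.2 (Nat.cast_le (α := ℝ).2 hxn))
  simp only [excessTest, cumulExcess_succ, Nat.add_sub_cancel] at hstep ⊢
  linarith

lemma excessTest_departures_le {x b c : ℕ} (hcb : c ≤ b) (hbx : b ≤ x) (hxn : x ≤ n) :
    ((x : ℝ) - b) * (excessTest n K (x - 1) b - excessTest n K x b) +
        ((b : ℝ) - c) * (excessTest n K x (b - 1) - excessTest n K x b) ≤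
      ((c : ℝ) - x) * ((b : ℝ) - K)⁺ + ((n : ℝ) - x) * (b * if K < b then 1 else 0) := by
  have first_position : ((x : ℝ) - b) * (excessTest n K (x - 1) b - excessTest n K x b) =
      ((b : ℝ) - x) * ((b : ℝ) - K)⁺ := by
    rw [← sub_mul_natCast_pred_sub_s1 hbx]
    simp only [excessTest]
    ring
  have second_position : ((b : ℝ) - c) * (excessTest n K x (b - 1) - excessTest n K x b) ≤
      ((c : ℝ) - b) * ((b : ℝ) - K)⁺ + ((n : ℝ) - x) * (b * if K < b then 1 else 0) := by
    rcases Nat.eq_zero_or_pos b with rfl | hb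
    · rw [Nat.eq_zero_of_le_zero hcb]
      simp
    have hstep := mul_le_mul_of_nonneg_left (excessTest_pred_right_sub_le (K := K) hb hxn)
      (sub_nonneg.2 (Nat.cast_le (α := ℝ).2 hcb))
    have dropped : 0 ≤ (c : ℝ) * (((n : ℝ) - x) * if K < b then 1 else 0) :=
      mul_nonneg c.cast_nonneg (mul_nonneg (sub_nonneg.2 (Nat.cast_le.2 hxn))
        (by split_ifs <;> simp))
    linarith
  linarith

lemma jsqGen_excessTest_le (hlam : 0 ≤ lam) (hq : InS n q) :
    jsqGen n lam (fun q => excessTest n K (q 0) (q 1)) q ≤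
      -(n * (1 - lam)) * ((q 1 : ℝ) - K)⁺ + n * lam * (if K - 1 ≤ q 1 then 1 else 0) +
        ((n : ℝ) - q 0) * (((q 1 : ℝ) - K)⁺ + q 1 * if K < q 1 then 1 else 0) +
        ((n : ℝ) - K)⁺ * (q 2 - n * lam * if q 1 = n then 1 else 0) := by
  obtain ⟨hqn, hmono, -⟩ := hq
  have harr := excessTest_arrivals_le (K := K) hlam (hmono 0) (hqn 0)
  have hdep := excessTest_departures_le (K := K) (hmono 1) (hmono 0) (hqn 0)
  have hthird : (q 2 : ℝ) * ((q 1 : ℝ) - K)⁺ ≤ q 2 * ((n : ℝ) - K)⁺ := by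
    gcongr
    exact posPart_mono (sub_le_sub_right (Nat.cast_le.2 (hqn 1)) K)
  rw [jsqGen_fst_snd]
  simp only [Nat.reduceAdd] at hdep
  linarith

/-- The test function whose negative drift `-2 (n - x) (b - n (1 - lam))` on `{K < b}` absorbs the
errors in the drift of `excessTest`; here `n - x` is the number of idle servers. -/
noncomputable def idleTest (n : ℕ) (K : ℝ) (x b : ℕ) : ℝ :=
  ((n : ℝ) - x) ^ 2 * if K < b then 1 else 0

lemma idleTest_arrivals_le {x b : ℕ} (hlam : lam ≤ 1) (hxn : x ≤ n) :
    n * lam * (if x < n then 1 else 0) * (idleTest n K (x + 1) b - idleTest n K x b) +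
        n * lam * (if x = n ∧ b < n then 1 else 0) *
          (idleTest n K x (b + 1) - idleTest n K x b) ≤
      (n - 2 * (n * lam) * ((n : ℝ) - x)) * if K < b then 1 else 0 := by
  have above_nonneg : (0 : ℝ) ≤ if K < (b : ℝ) then 1 else 0 := by split_ifs <;> simp
  have hrate := mul_le_mul_of_nonneg_right (mul_le_of_le_one_right n.cast_nonneg hlam) above_nonneg
  rcases hxn.lt_or_eq with hx | rfl
  · simp only [idleTest, Nat.cast_add_one, hx, hx.ne, false_and, if_true, if_false]
    linarith
  · simp only [idleTest, lt_irrefl, if_false, sub_self]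
    linarith [mul_nonneg x.cast_nonneg above_nonneg]

lemma idleTest_departures_le {x b c : ℕ} (hcb : c ≤ b) (hbx : b ≤ x) :
    ((x : ℝ) - b) * (idleTest n K (x - 1) b - idleTest n K x b) +
        ((b : ℝ) - c) * (idleTest n K x (b - 1) - idleTest n K x b) ≤
      ((x : ℝ) - b) * (2 * ((n : ℝ) - x) + 1) * if K < b then 1 else 0 := by
  have first_position : ((x : ℝ) - b) * (idleTest n K (x - 1) b - idleTest n K x b) =
      ((x : ℝ) - b) * (2 * ((n : ℝ) - x) + 1) * if K < b then 1 else 0 := by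
    rcases Nat.eq_zero_or_pos x with rfl | hx
    · rw [Nat.eq_zero_of_le_zero hbx]
      simp
    · simp only [idleTest, Nat.cast_pred hx]
      ring
  have second_position : idleTest n K x (b - 1) ≤ idleTest n K x b := by
    have hpred : ((b - 1 : ℕ) : ℝ) ≤ b := Nat.cast_le.2 b.pred_le
    unfold idleTest
    gcongr
    split_ifs <;> linarith
  have := mul_nonpos_of_nonneg_of_nonpos (sub_nonneg.2 (Nat.cast_le (α := ℝ).2 hcb))
    (sub_nonpos.2 second_position)
  linarith

lemma jsqGen_idleTest_le (hlam : lam ≤ 1) (hq : InS n q) :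
    jsqGen n lam (fun q => idleTest n K (q 0) (q 1)) q ≤
      2 * (n - ((n : ℝ) - q 0) * (q 1 - n * (1 - lam))) * if K < q 1 then 1 else 0 := by
  obtain ⟨hqn, hmono, -⟩ := hq
  have harr := idleTest_arrivals_le (K := K) (b := q 1) hlam (hqn 0)
  have hdep := idleTest_departures_le (n := n) (K := K) (hmono 1) (hmono 0)
  rw [jsqGen_fst_snd]
  simp only [Nat.reduceAdd] at hdep
  have hx : (q 0 : ℝ) ≤ n := Nat.cast_le.2 (hqn 0)
  have slack_nonneg :
      0 ≤ (2 * ((n : ℝ) - q 0) ^ 2 + (n - q 0) + q 1) * if K < (q 1 : ℝ) then 1 else 0 := by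
    refine mul_nonneg ?_ (by split_ifs <;> simp)
    have := sub_nonneg.2 hx
    positivity
  linarith

lemma le_div_sub_mul_sub {δ b : ℝ} (hδ : 0 ≤ δ) (hδK : δ < K) (hKb : K ≤ b) :
    b ≤ K / (K - δ) * (b - δ) := by
  rw [div_mul_eq_mul_div, le_div_iff₀ (sub_pos.2 hδK)]
  linarith [mul_le_mul_of_nonneg_left hKb hδ]

lemma jsqGen_excessTest_add_idleTest_le (hlam₀ : 0 ≤ lam) (hlam₁ : lam ≤ 1)
    (hK : n * (1 - lam) < K) (hq : InS n q) :
    jsqGen n lam (fun q => excessTest n K (q 0) (q 1)) q +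
        (1 + K / (K - n * (1 - lam))) / 2 * jsqGen n lam (fun q => idleTest n K (q 0) (q 1)) q ≤
      -(n * (1 - lam)) * ((q 1 : ℝ) - K)⁺ +
        n * (2 + K / (K - n * (1 - lam))) * (if K - 1 ≤ q 1 then 1 else 0) +
        ((n : ℝ) - K)⁺ * (q 2 - n * lam * if q 1 = n then 1 else 0) := by
  have hδ : 0 ≤ n * (1 - lam) := mul_nonneg n.cast_nonneg (sub_nonneg.2 hlam₁)
  have hexcess := jsqGen_excessTest_le (K := K) hlam₀ hq
  have hidle := jsqGen_idleTest_le (K := K) hlam₁ hq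
  have hrate : n * lam ≤ n := mul_le_of_le_one_right n.cast_nonneg hlam₁
  have idle_nonneg : 0 ≤ (n : ℝ) - q 0 := sub_nonneg.2 (Nat.cast_le.2 (hq.1 0))
  set δ := n * (1 - lam)
  have hKδ : 0 < K - δ := sub_pos.2 hK
  have ratio_nonneg : 0 ≤ K / (K - δ) := div_nonneg (hδ.trans hK.le) hKδ.le
  have hidle' := mul_le_mul_of_nonneg_left hidle
    (by positivity : 0 ≤ (1 + K / (K - δ)) / 2)
  by_cases hb : K < q 1
  · have hnear : K - 1 ≤ (q 1 : ℝ) := by linarith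
    have hb_le := le_div_sub_mul_sub hδ hK hb.le
    have absorbed := mul_le_mul_of_nonneg_left
      (by linarith : (q 1 - K) + (q 1 : ℝ) ≤ (1 + K / (K - δ)) * (q 1 - δ)) idle_nonneg
    rw [posPart_of_nonneg (sub_nonneg.2 hb.le)] at hexcess ⊢
    simp only [hb, hnear, if_true] at hexcess hidle' ⊢
    linarith
  · rw [posPart_of_nonpos (sub_nonpos.2 (not_lt.1 hb))] at hexcess ⊢
    simp only [hb, if_false] at hexcess hidle'
    have hnear : n * lam * (if K - 1 ≤ (q 1 : ℝ) then 1 else 0) ≤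
        n * (2 + K / (K - δ)) * (if K - 1 ≤ (q 1 : ℝ) then 1 else 0) := by
      refine mul_le_mul_of_nonneg_right ?_ (by split_ifs <;> simp)
      linarith [mul_nonneg n.cast_nonneg ratio_nonneg, n.cast_nonneg (α := ℝ)]
    linarith

end Generator

section Stationary

variable {Ωp : Type*} [MeasurableSpace Ωp] {μ : Measure Ωp} {n : ℕ} {lam : ℝ} {Q : Ωp → ℕ → ℕ}

lemma integral_ite_one_zero {p : Ωp → Prop} [DecidablePred p] (hp : MeasurableSet {ω | p ω}) :
    ∫ ω, (if p ω then (1 : ℝ) else 0) ∂μ = μ.real {ω | p ω} := by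
  rw [← integral_indicator_one hp]
  simp only [Set.indicator_apply, Set.mem_ofPred_eq, Pi.one_apply]

lemma integral_le_add_integral_posPart_sub [IsProbabilityMeasure μ] {X : Ωp → ℝ}
    (hX : Integrable X μ) (t : ℝ) : ∫ ω, X ω ∂μ ≤ t + ∫ ω, (X ω - t)⁺ ∂μ := by
  have hpos : Integrable (fun ω => (X ω - t)⁺) μ := (hX.sub (integrable_const t)).pos_part
  calc ∫ ω, X ω ∂μ ≤ ∫ ω, (t + (X ω - t)⁺) ∂μ :=
        integral_mono hX ((integrable_const t).add hpos)
          fun ω => sub_le_iff_le_add'.1 (le_posPart _)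
    _ = t + ∫ ω, (X ω - t)⁺ ∂μ := by
        rw [integral_add (integrable_const t) hpos, integral_const, probReal_univ, one_smul]

lemma GeneratorStationary.integral_nonneg_of_jsqGen_le (hstat : GeneratorStationary μ n lam Q)
    {f : (ℕ → ℕ) → ℝ} (hf : Integrable (fun ω => f (Q ω)) μ) {g : Ωp → ℝ} (hg : Integrable g μ)
    (hfg : ∀ ω, jsqGen n lam f (Q ω) ≤ g ω) : 0 ≤ ∫ ω, g ω ∂μ := by
  obtain ⟨hint, hzero⟩ := hstat f hf
  exact hzero ▸ integral_mono hint hg hfg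

variable [IsFiniteMeasure μ]

lemma integrable_comp_of_dependsOn (hQ : Measurable Q) (hQn : ∀ ω i, Q ω i ≤ n)
    {f : (ℕ → ℕ) → ℝ} {s : Set ℕ} (hs : s.Finite) (hf : DependsOn f s) :
    Integrable (fun ω => f (Q ω)) μ := by
  have := hs.to_subtype
  have := Fintype.ofFinite s
  obtain ⟨g, rfl⟩ := dependsOn_iff_exists_comp.1 hf
  have hX : Measurable fun ω => s.domRestrict (Q ω) :=
    measurable_pi_lambda _ fun i => (measurable_pi_apply i.1).comp hQ
  have hfin : (Set.range fun ω => s.domRestrict (Q ω)).Finite :=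
    (Set.finite_Iic fun _ : s => n).subset (Set.range_subset_iff.2 fun ω i => hQn ω i)
  let X : SimpleFunc Ωp (s → ℕ) :=
    ⟨fun ω => s.domRestrict (Q ω), fun x => hX (measurableSet_singleton x), hfin⟩
  exact (X.map g).integrable_of_isFiniteMeasure

lemma integrable_coord (hQ : Measurable Q) (hQn : ∀ ω i, Q ω i ≤ n) (g : ℕ → ℝ) (i : ℕ) :
    Integrable (fun ω => g (Q ω i)) μ :=
  integrable_comp_of_dependsOn (f := fun q => g (q i)) hQ hQn (Set.finite_singleton i)
    fun _ _ h => congrArg g (h i rfl)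

lemma measurableSet_coord (hQ : Measurable Q) (p : ℕ → Prop) (i : ℕ) :
    MeasurableSet {ω | p (Q ω i)} :=
  (measurable_pi_apply i).comp hQ (MeasurableSet.of_discrete (s := {k | p k}))

lemma tendsto_integral_coord_atTop (hQ : Measurable Q) (hQS : ∀ ω, InS n (Q ω)) :
    Filter.Tendsto (fun i => ∫ ω, (Q ω i : ℝ) ∂μ) Filter.atTop (nhds 0) := by
  rw [← integral_zero Ωp ℝ (μ := μ)]
  refine tendsto_integral_of_dominated_convergence (fun _ => (n : ℝ))
    (fun i => (integrable_coord hQ (fun ω => (hQS ω).1) _ i).aestronglyMeasurable)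
    (integrable_const _) (fun i => .of_forall fun ω => ?_) (.of_forall fun ω => ?_)
  · simpa using (hQS ω).1 i
  · refine tendsto_const_nhds.congr' ?_
    have hzero := (hQS ω).2.2.compl_mem_cofinite
    rw [Nat.cofinite_eq_atTop] at hzero
    filter_upwards [hzero] with i hi
    rw [Function.notMem_support.1 hi, Nat.cast_zero]

lemma GeneratorStationary.integral_coord_succ_le (hstat : GeneratorStationary μ n lam Q)
    (hlam : 0 ≤ lam) (hQ : Measurable Q) (hQS : ∀ ω, InS n (Q ω)) (k : ℕ) :
    ∫ ω, (Q ω (k + 1) : ℝ) ∂μ ≤ n * lam * μ.real {ω | Q ω k = n} := by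
  have hQn : ∀ ω i, Q ω i ≤ n := fun ω => (hQS ω).1
  have coord_int : ∀ i, Integrable (fun ω => (Q ω i : ℝ)) μ := integrable_coord hQ hQn _
  have full_int := (integrable_coord (μ := μ) hQ hQn (fun b => if b = n then (1 : ℝ) else 0)
    k).const_mul (n * lam)
  have truncated : ∀ m, ∫ ω, (Q ω (k + 1) : ℝ) ∂μ ≤
      n * lam * μ.real {ω | Q ω k = n} + ∫ ω, (Q ω (k + 1 + m) : ℝ) ∂μ := by
    intro m
    have := hstat.integral_nonneg_of_jsqGen_le
      (integrable_comp_of_dependsOn hQ hQn (Set.finite_Iio _) (dependsOn_tailMass (k + 1) m))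
      ((full_int.sub (coord_int (k + 1))).add (coord_int (k + 1 + m)))
      fun ω => jsqGen_tailMass_le hlam (hQS ω) k m
    rw [integral_add' (full_int.sub (coord_int _)) (coord_int _),
      integral_sub' full_int (coord_int _), integral_const_mul,
      integral_ite_one_zero (measurableSet_coord hQ (· = n) k)] at this
    linarith
  have limit := ((tendsto_integral_coord_atTop (μ := μ) hQ hQS).comp
    (Filter.tendsto_add_atTop_nat (k + 1))).const_add (n * lam * μ.real {ω | Q ω k = n})
  rw [add_zero] at limit
  exact ge_of_tendsto' limit fun m => by simpa only [Function.comp, add_comm m] using truncated m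

theorem GeneratorStationary.integral_posPart_sub_le (hstat : GeneratorStationary μ n lam Q)
    (hn : 0 < n) (hlam₀ : 0 ≤ lam) (hlam₁ : lam < 1) {K : ℝ} (hK : n * (1 - lam) < K)
    (hQ : Measurable Q) (hQS : ∀ ω, InS n (Q ω)) :
    ∫ ω, ((Q ω 1 : ℝ) - K)⁺ ∂μ ≤
      (2 + K / (K - n * (1 - lam))) / (1 - lam) * μ.real {ω | K - 1 ≤ Q ω 1} := by
  have hQn : ∀ ω i, Q ω i ≤ n := fun ω => (hQS ω).1
  have stationary : ∀ h : ℕ → ℕ → ℝ,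
      Integrable (fun ω => jsqGen n lam (fun q => h (q 0) (q 1)) (Q ω)) μ ∧
        ∫ ω, jsqGen n lam (fun q => h (q 0) (q 1)) (Q ω) ∂μ = 0 := fun h =>
    hstat _ (integrable_comp_of_dependsOn hQ hQn (Set.finite_Iio 2) (dependsOn_fst_snd h))
  obtain ⟨excess_int, excess_zero⟩ := stationary (excessTest n K)
  obtain ⟨idle_int, idle_zero⟩ := stationary (idleTest n K)
  have pos_int := (integrable_coord (μ := μ) hQ hQn (fun b => ((b : ℝ) - K)⁺) 1).const_mul
    (-(n * (1 - lam)))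
  have near_int := (integrable_coord (μ := μ) hQ hQn
    (fun b => if K - 1 ≤ (b : ℝ) then (1 : ℝ) else 0) 1).const_mul
    (n * (2 + K / (K - n * (1 - lam))))
  have third_int := integrable_coord (μ := μ) hQ hQn (fun b => (b : ℝ)) 2
  have full_int := (integrable_coord (μ := μ) hQ hQn
    (fun b => if b = n then (1 : ℝ) else 0) 1).const_mul (n * lam)
  have error_int := (third_int.sub full_int).const_mul ((n : ℝ) - K)⁺
  have drift := integral_mono
    (excess_int.add (idle_int.const_mul ((1 + K / (K - n * (1 - lam))) / 2)))
    ((pos_int.add near_int).add error_int)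
    fun ω => jsqGen_excessTest_add_idleTest_le hlam₀ hlam₁.le hK (hQS ω)
  rw [integral_add' excess_int (idle_int.const_mul _), integral_const_mul, excess_zero, idle_zero,
    integral_add' (pos_int.add near_int) error_int, integral_add' pos_int near_int,
    integral_const_mul, integral_const_mul, integral_const_mul, integral_sub' third_int full_int,
    integral_const_mul, integral_ite_one_zero (measurableSet_coord hQ (K - 1 ≤ ·) 1),
    integral_ite_one_zero (measurableSet_coord hQ (· = n) 1)] at drift
  have error_nonpos := mul_nonpos_of_nonneg_of_nonpos (posPart_nonneg ((n : ℝ) - K))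
    (sub_nonpos.2 (hstat.integral_coord_succ_le hlam₀ hQ hQS 1))
  rw [div_mul_eq_mul_div, le_div_iff₀ (sub_pos.2 hlam₁)]
  refine le_of_mul_le_mul_left ?_ (Nat.cast_pos (α := ℝ).2 hn)
  linarith

theorem GeneratorStationary.integral_posPart_scaled_le {β κ : ℝ}
    (hstat : GeneratorStationary μ n (1 - β / √n) Q) (hn : 0 < n) (hβ : 0 < β) (hβn : β ≤ √n)
    (hκ : β < κ) (hQ : Measurable Q) (hQS : ∀ ω, InS n (Q ω)) :
    ∫ ω, ((Q ω 1 : ℝ) / n - κ / √n)⁺ ∂μ ≤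
      1 / (β * √n) * (2 + κ / (κ - β)) * μ.real {ω | κ / √n - 1 / n ≤ (Q ω 1 : ℝ) / n} := by
  have hn' : (0 : ℝ) < n := Nat.cast_pos.2 hn
  have hs : 0 < √(n : ℝ) := Real.sqrt_pos.2 hn'
  have hδ : (n : ℝ) * (1 - (1 - β / √n)) = β * √n := by
    rw [sub_sub_cancel, mul_div_left_comm, Real.div_sqrt]
  have hlevel : κ / √(n : ℝ) = κ * √n / n := by
    rw [mul_div_assoc, Real.sqrt_div_self, ← div_eq_mul_inv]
  have hposPart : ∀ b : ℝ, (b / n - κ / √n)⁺ = (b - κ * √n)⁺ / n := fun b => by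
    rw [hlevel, ← sub_div, posPart_def, posPart_def, ← max_div_div_right hn'.le, zero_div]
  have hevent : {ω | κ / √n - 1 / n ≤ (Q ω 1 : ℝ) / n} = {ω | κ * √n - 1 ≤ (Q ω 1 : ℝ)} := by
    simp only [hlevel, ← sub_div, div_le_div_iff_of_pos_right hn']
  have unscaled := hstat.integral_posPart_sub_le hn (sub_nonneg.2 ((div_le_one hs).2 hβn))
    (sub_lt_self 1 (div_pos hβ hs)) (hδ ▸ mul_lt_mul_of_pos_right hκ hs) hQ hQS
  rw [hδ, ← sub_mul, mul_div_mul_right _ _ hs.ne', sub_sub_cancel] at unscaled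
  simp only [hposPart, hevent, integral_div]
  rw [div_le_iff₀ hn']
  refine unscaled.trans_eq ?_
  field_simp
  rw [Real.sq_sqrt hn'.le]
  ring

end Stationary

theorem GeneratorStationary.integral_sqrt_mul_scaled_le {Ωp : Type*} [MeasurableSpace Ωp]
    {μ : Measure Ωp} [IsProbabilityMeasure μ] {n : ℕ} {β κ : ℝ} {Q : Ωp → ℕ → ℕ}
    (hstat : GeneratorStationary μ n (1 - β / √n) Q) (hn : 0 < n) (hβ : 0 < β) (hβn : β ≤ √n)
    (hκ : β < κ) (hQ : Measurable Q) (hQS : ∀ ω, InS n (Q ω)) :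
    ∫ ω, √n * ((Q ω 1 : ℝ) / n) ∂μ ≤ κ + 1 / β * (2 + κ / (κ - β)) := by
  have hs : 0 < √(n : ℝ) := Real.sqrt_pos.2 (Nat.cast_pos.2 hn)
  have ratio_nonneg : 0 ≤ κ / (κ - β) := div_nonneg (hβ.trans hκ).le (sub_nonneg.2 hκ.le)
  have excess_le : ∫ ω, ((Q ω 1 : ℝ) / n - κ / √n)⁺ ∂μ ≤ 1 / (β * √n) * (2 + κ / (κ - β)) :=
    (hstat.integral_posPart_scaled_le hn hβ hβn hκ hQ hQS).trans
      (mul_le_of_le_one_right (by positivity) measureReal_le_one)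
  have mean_le := integral_le_add_integral_posPart_sub
    (integrable_coord (μ := μ) hQ (fun ω => (hQS ω).1) (fun b => (b : ℝ) / n) 1) (κ / √n)
  rw [integral_const_mul]
  calc √n * ∫ ω, (Q ω 1 : ℝ) / n ∂μ
      ≤ √n * (κ / √n + 1 / (β * √n) * (2 + κ / (κ - β))) := by
        refine mul_le_mul_of_nonneg_left ?_ hs.le
        exact mean_le.trans (add_le_add_right excess_le _)
    _ = κ + 1 / β * (2 + κ / (κ - β)) := by field_simp

/-- in the Halfin-Whitt regime `λ = 1 - β/√n`, for a generator-stationary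
`Q` and `X₂ = Q₂/n` (here `Q ω 1` is the paper's `Q₂`), for every `κ > β`:
`E[(X₂ - κ/√n)·1(X₂ ≥ κ/√n)] ≤ (1/(β√n))(12 + 6κ/(κ-β))·P(X₂ ≥ κ/√n - 1/n)`, and
consequently `E[√n X₂] ≤ 2κ + (1/β)(12 + 6κ/(κ-β))`. -/
theorem stmt1 {Ωp : Type*} [MeasurableSpace Ωp] (μ : Measure Ωp)
    [IsProbabilityMeasure μ] (n : ℕ) (hn : 1 ≤ n) (β : ℝ) (hβ : 0 < β)
    (hlam : 0 < 1 - β / Real.sqrt n)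
    (Q : Ωp → ℕ → ℕ) (hQmeas : Measurable Q) (hQS : ∀ ω, InS n (Q ω))
    (hstat : GeneratorStationary μ n (1 - β / Real.sqrt n) Q)
    (κ : ℝ) (hκ : β < κ) :
    (∫ ω, ((Q ω 1 : ℝ) / n - κ / Real.sqrt n) *
        (if κ / Real.sqrt n ≤ (Q ω 1 : ℝ) / n then (1 : ℝ) else 0) ∂μ) ≤
      1 / (β * Real.sqrt n) * (12 + 6 * κ / (κ - β)) *
        (μ {ω | κ / Real.sqrt n - 1 / n ≤ (Q ω 1 : ℝ) / n}).toReal ∧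
    (∫ ω, Real.sqrt n * ((Q ω 1 : ℝ) / n) ∂μ) ≤
      2 * κ + 1 / β * (12 + 6 * κ / (κ - β)) := by
  have hβn : β ≤ √n :=
    ((div_lt_one (Real.sqrt_pos.2 (Nat.cast_pos.2 hn))).1 (sub_pos.1 hlam)).le
  have hκ₀ : 0 < κ := hβ.trans hκ
  have constant_le : 2 + κ / (κ - β) ≤ 12 + 6 * κ / (κ - β) := by
    have : 0 ≤ κ / (κ - β) := div_nonneg hκ₀.le (sub_nonneg.2 hκ.le)
    rw [mul_div_assoc]
    linarith
  constructor
  · simp only [sub_mul_ite_le_eq_posPart]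
    refine (hstat.integral_posPart_scaled_le hn hβ hβn hκ hQmeas hQS).trans ?_
    rw [measureReal_def]
    gcongr
  · refine (hstat.integral_sqrt_mul_scaled_le hn hβ hβn hκ hQmeas hQS).trans ?_
    gcongr
    linarith
end

section
/- Fix κ > β and let h(x) = max(x_2 − κ/√n, 0). There exists a function f : Ω → ℝ solving the fluid PDE for h, having absolutely continuous first-order partial derivatives, whose second-order weak derivatives satisfy: (i) f_{11}(x), f_{12}(x), f_{22}(x) ≥ 0 for all x ∈ Ω; (ii) f_{11}(x) = f_{22}(x) = 0 whenever x_2 ∈ [0, κ/√n]; and (iii) f_{11}(x) ≤ (√n/β)·(κ/(κ−β) + 1) and f_{22}(x) ≤ (√n/β)·(5 + 2κ/(κ−β)) whenever x_2 ≥ κ/√n. -/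
open MeasureTheory

/-!
Write `b = β / √n`, `k = κ / √n` and `c = x₁ + b`, `x = x₂`. The characteristics of `L` are the
orbits of `c' = x - c`, `x' = -x`, along which `c / x + log x` is conserved. The solution `f` is the
integral of `h` along the characteristic through the point, continued down the boundary `x₁ = 0` at
speed `b` once it gets there. If the characteristic with invariant `s` meets the boundary at height
`M ≥ k`, then
`f = (x - M) - k * log (x / M) + (M - k) ^ 2 / (2 * b)`,
a function of `x` alone plus a function `Φ` of `s` alone; characteristics that fall to level `k`
before reaching the boundary correspond to `M = k`.

Since `dM/ds = M ^ 2 / (M - b)`, one finds `Φ' = M * (M - k) / b` and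
`Φ'' = M ^ 2 * (2 * M - k) / (b * (M - b))`, hence `0 ≤ Φ' ≤ (1 - b / M) * Φ'' ≤ Φ''`. Together with
`k ≤ M ≤ x` and `c ≤ b` this gives the signs of the second derivatives, and the bound on `f₂₂`
follows from `(x - c) / x ^ 2 ≤ 1 / M`, which is the inequality `log t ≤ t - 1` at `t = x / M`.
-/

open Set

section WeakDerivative

/-- `f` is locally absolutely continuous on the real line with weak derivative `f'`, expressed by
the integral representation of its increments. -/
def HasWeakDeriv (f f' : ℝ → ℝ) : Prop :=
  ∀ a b : ℝ, IntervalIntegrable f' volume a b ∧ f b - f a = ∫ u in a..b, f' u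

theorem HasWeakDeriv.comp_add_const {f f' : ℝ → ℝ} (h : HasWeakDeriv f f') (d : ℝ) :
    HasWeakDeriv (fun x ↦ f (x + d)) (fun x ↦ f' (x + d)) := by
  intro a b
  obtain ⟨hintegrable, heq⟩ := h (a + d) (b + d)
  refine ⟨by simpa using hintegrable.comp_add_right d, ?_⟩
  rw [heq, intervalIntegral.integral_comp_add_right]

theorem intervalIntegrable_of_hasDerivAt_off_finite_of_nonneg {f f' : ℝ → ℝ} {S : Set ℝ}
    (hf : Continuous f) (hS : S.Finite) {a b : ℝ} (hab : a ≤ b)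
    (hderiv : ∀ x ∈ Ioo a b \ S, HasDerivAt f (f' x) x) (hnonneg : ∀ x ∈ Ioo a b, 0 ≤ f' x) :
    IntervalIntegrable f' volume a b := by
  induction S, hS using Set.Finite.induction_on generalizing a b with
  | empty =>
    refine intervalIntegral.intervalIntegrable_deriv_of_nonneg hf.continuousOn ?_ ?_ <;>
      rw [min_eq_left hab, max_eq_right hab]
    · simpa only [sdiff_empty] using hderiv
    · exact hnonneg
  | @insert c S _ _ ih =>
    by_cases hc : c ∈ Ioo a b
    · refine (ih hc.1.le (fun x hx ↦ ?_) fun x hx ↦ hnonneg x ⟨hx.1, hx.2.trans hc.2⟩).trans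
        (ih hc.2.le (fun x hx ↦ ?_) fun x hx ↦ hnonneg x ⟨hc.1.trans hx.1, hx.2⟩)
      · exact hderiv x ⟨⟨hx.1.1, hx.1.2.trans hc.2⟩, not_or.2 ⟨hx.1.2.ne, hx.2⟩⟩
      · exact hderiv x ⟨⟨hc.1.trans hx.1.1, hx.1.2⟩, not_or.2 ⟨hx.1.1.ne', hx.2⟩⟩
    · refine ih hab (fun x hx ↦ hderiv x ⟨hx.1, not_or.2 ⟨?_, hx.2⟩⟩) hnonneg
      rintro rfl
      exact hc hx.1

theorem hasWeakDeriv_of_hasDerivAt_off_finite_of_nonneg {f f' : ℝ → ℝ} {S : Set ℝ}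
    (hf : Continuous f) (hS : S.Finite) (hderiv : ∀ x ∉ S, HasDerivAt f (f' x) x)
    (hnonneg : ∀ x, 0 ≤ f' x) : HasWeakDeriv f f' := by
  have hintegrable (a b : ℝ) (hab : a ≤ b) : IntervalIntegrable f' volume a b :=
    intervalIntegrable_of_hasDerivAt_off_finite_of_nonneg hf hS hab
      (fun x hx ↦ hderiv x hx.2) fun x _ ↦ hnonneg x
  intro a b
  have hab : IntervalIntegrable f' volume a b :=
    (le_total a b).elim (hintegrable a b) fun h ↦ (hintegrable b a h).symm
  exact ⟨hab, (integral_eq_of_hasDerivAt_off_countable f f' hS.countable hf.continuousOn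
    (fun x hx ↦ hderiv x hx.2) hab).symm⟩

end WeakDerivative

section CompMax

variable {G : ℝ → ℝ} {k x : ℝ}

theorem hasDerivAt_comp_max_of_lt (hx : x < k) : HasDerivAt (fun t ↦ G (max t k)) 0 x := by
  refine (hasDerivAt_const x (G k)).congr_of_eventuallyEq ?_
  filter_upwards [gt_mem_nhds hx] with t ht
  rw [max_eq_right ht.le]

theorem hasDerivAt_comp_max_of_gt {g : ℝ} (hG : HasDerivAt G g x) (hx : k < x) :
    HasDerivAt (fun t ↦ G (max t k)) g x := by
  refine hG.congr_of_eventuallyEq ?_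
  filter_upwards [lt_mem_nhds hx] with t ht
  rw [max_eq_left ht.le]

theorem hasDerivAt_comp_max {G' : ℝ → ℝ} (hG : ∀ y, k ≤ y → HasDerivAt G (G' y) y)
    (hk : G' k = 0) (x : ℝ) : HasDerivAt (fun t ↦ G (max t k)) (G' (max x k)) x := by
  rcases lt_trichotomy x k with hx | rfl | hx
  · rw [max_eq_right hx.le, hk]
    exact hasDerivAt_comp_max_of_lt hx
  · rw [max_self, ← hasDerivWithinAt_univ, ← Iic_union_Ici (a := x)]
    refine HasDerivWithinAt.union ?_ ?_
    · rw [hk]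
      exact (hasDerivWithinAt_const x _ (G x)).congr (fun t ht ↦ by rw [max_eq_right ht])
        (by rw [max_self])
    · exact (hG x le_rfl).hasDerivWithinAt.congr (fun t ht ↦ by rw [max_eq_left ht])
        (by rw [max_self])
  · rw [max_eq_left hx.le]
    exact hasDerivAt_comp_max_of_gt (hG x hx.le) hx

theorem hasWeakDeriv_comp_max {G' : ℝ → ℝ} {S : Set ℝ} (hG : ContinuousOn G (Ici k))
    (hS : S.Finite) (hderiv : ∀ x ∈ Ioi k \ S, HasDerivAt G (G' x) x)
    (hnonneg : ∀ x ∈ Ioi k, 0 ≤ G' x) :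
    HasWeakDeriv (fun x ↦ G (max x k)) ((Ioi k).indicator G') := by
  refine hasWeakDeriv_of_hasDerivAt_off_finite_of_nonneg (S := insert k S)
    (hG.comp_continuous (continuous_id.max continuous_const) fun x ↦ le_max_right x k)
    (hS.insert k) (fun x hx ↦ ?_) (indicator_nonneg hnonneg)
  obtain ⟨hxk, hxS⟩ := not_or.1 hx
  rcases lt_or_gt_of_ne hxk with hlt | hgt
  · rw [indicator_of_notMem (notMem_Ioi.2 hlt.le)]
    exact hasDerivAt_comp_max_of_lt hlt
  · rw [indicator_of_mem (mem_Ioi.2 hgt)]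
    exact hasDerivAt_comp_max_of_gt (hderiv x ⟨hgt, hxS⟩) hgt

end CompMax

section ClampedInverse

variable {α β : Type*} [LinearOrder α] [LinearOrder β] [Nonempty α] {g : α → β} {k y : α} {s : β}

/-- The inverse of a strictly increasing map `g : [k, ∞) → [g k, ∞)`, extended to all `s ≤ g k` by
the constant `k`. -/
noncomputable def clampedInv (g : α → β) (k : α) (s : β) : α :=
  Function.invFunOn g (Ici k) (max s (g k))

theorem le_clampedInv (hsurj : SurjOn g (Ici k) (Ici (g k))) : k ≤ clampedInv g k s :=
  Function.invFunOn_mem (hsurj (le_max_right s (g k)))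

theorem apply_clampedInv (hsurj : SurjOn g (Ici k) (Ici (g k))) :
    g (clampedInv g k s) = max s (g k) :=
  Function.invFunOn_eq (hsurj (le_max_right s (g k)))

theorem clampedInv_apply (hmono : StrictMonoOn g (Ici k)) (hy : k ≤ y) :
    clampedInv g k (g y) = y := by
  rw [clampedInv, max_eq_left (hmono.monotoneOn self_mem_Ici hy hy)]
  exact hmono.injOn.leftInvOn_invFunOn hy

theorem clampedInv_of_le (hmono : StrictMonoOn g (Ici k)) (hs : s ≤ g k) :
    clampedInv g k s = k := by
  rw [clampedInv, max_eq_right hs]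
  exact hmono.injOn.leftInvOn_invFunOn self_mem_Ici

theorem lt_clampedInv (hsurj : SurjOn g (Ici k) (Ici (g k))) (hs : g k < s) :
    k < clampedInv g k s := by
  refine (le_clampedInv hsurj).lt_of_ne fun h ↦ ?_
  have hval := apply_clampedInv (s := s) hsurj
  rw [← h, max_eq_left hs.le] at hval
  exact hs.ne hval

theorem monotone_clampedInv (hmono : StrictMonoOn g (Ici k))
    (hsurj : SurjOn g (Ici k) (Ici (g k))) : Monotone (clampedInv g k) := by
  intro s t hst
  rw [← hmono.le_iff_le (le_clampedInv hsurj) (le_clampedInv hsurj), apply_clampedInv hsurj,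
    apply_clampedInv hsurj]
  exact max_le_max_right _ hst

theorem continuous_clampedInv [TopologicalSpace α] [OrderTopology α] [DenselyOrdered α]
    [TopologicalSpace β] [OrderTopology β] (hmono : StrictMonoOn g (Ici k))
    (hsurj : SurjOn g (Ici k) (Ici (g k))) : Continuous (clampedInv g k) := by
  let M (s : β) : Ici k := ⟨clampedInv g k s, le_clampedInv hsurj⟩
  have hM : Monotone M := monotone_clampedInv hmono hsurj
  have hM_surj : Function.Surjective M := fun y ↦
    ⟨g y, Subtype.ext (clampedInv_apply hmono y.2)⟩
  exact continuous_subtype_val.comp (hM.continuous_of_surjective hM_surj)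

theorem hasDerivAt_clampedInv {g : ℝ → ℝ} {k s g' : ℝ} (hmono : StrictMonoOn g (Ici k))
    (hsurj : SurjOn g (Ici k) (Ici (g k))) (hs : g k < s)
    (hg : HasDerivAt g g' (clampedInv g k s)) (hg' : g' ≠ 0) :
    HasDerivAt (clampedInv g k) g'⁻¹ s := by
  refine hg.of_local_left_inverse (continuous_clampedInv hmono hsurj).continuousAt hg' ?_
  filter_upwards [lt_mem_nhds hs] with t ht
  rw [apply_clampedInv hsurj, max_eq_left ht.le]

end ClampedInverse

section OrbitInvariant

variable {b c k x y : ℝ}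

/-- The first integral of the fluid flow `(x₁, x₂)' = (x₂ - x₁ - b, -x₂)`, in the shifted
coordinate `c = x₁ + b`, which satisfies `c' = x - c` along orbits with `x = x₂`. -/
noncomputable def orbitInvariant (c x : ℝ) : ℝ :=
  c / x + Real.log x

theorem hasDerivAt_orbitInvariant_left : HasDerivAt (fun c ↦ orbitInvariant c x) (1 / x) c :=
  ((hasDerivAt_id c).div_const x).add_const _

theorem hasDerivAt_orbitInvariant (hx : x ≠ 0) :
    HasDerivAt (orbitInvariant c) ((x - c) / x ^ 2) x := by
  refine (((hasDerivAt_const x c).div (hasDerivAt_id x) hx).add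
    (Real.hasDerivAt_log hx)).congr_deriv ?_
  simp only [id]
  field_simp
  ring

theorem continuousOn_orbitInvariant (hk : 0 < k) : ContinuousOn (orbitInvariant c) (Ici k) :=
  fun _ hx ↦ (hasDerivAt_orbitInvariant (hk.trans_le hx).ne').continuousAt.continuousWithinAt

theorem strictMonoOn_orbitInvariant (hk : 0 < k) (hc : c ≤ k) :
    StrictMonoOn (orbitInvariant c) (Ici k) := by
  refine strictMonoOn_of_deriv_pos (convex_Ici k) (continuousOn_orbitInvariant hk) fun x hx ↦ ?_
  rw [interior_Ici, mem_Ioi] at hx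
  have hx0 : 0 < x := hk.trans hx
  rw [(hasDerivAt_orbitInvariant hx0.ne').deriv]
  exact div_pos (by linarith) (by positivity)

theorem surjOn_orbitInvariant (hk : 0 < k) :
    SurjOn (orbitInvariant c) (Ici k) (Ici (orbitInvariant c k)) :=
  intermediate_value_Ici (continuousOn_orbitInvariant hk)
    ((tendsto_const_nhds.div_atTop Filter.tendsto_id).add_atTop Real.tendsto_log_atTop)

theorem orbitInvariant_le_orbitInvariant (hx : 0 ≤ x) (hc : c ≤ b) :
    orbitInvariant c x ≤ orbitInvariant b x := by
  unfold orbitInvariant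
  gcongr

theorem sub_div_sq_le_of_orbitInvariant_eq (hb : 0 ≤ b) (hx : 0 < x) (hy : 0 < y)
    (h : orbitInvariant b y = orbitInvariant c x) : (x - c) / x ^ 2 ≤ 1 / y := by
  have hlog : Real.log x - Real.log y ≤ x / y - 1 := by
    rw [← Real.log_div hx.ne' hy.ne']
    exact Real.log_le_sub_one_of_pos (div_pos hx hy)
  have hby : 0 ≤ b / y := by positivity
  unfold orbitInvariant at h
  calc (x - c) / x ^ 2 = (1 - c / x) / x := by field_simp
    _ ≤ (x / y) / x := by gcongr; linarith
    _ = 1 / y := by field_simp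

end OrbitInvariant

section ExitLevel

variable {b c k s x : ℝ}

/-- The height at which the fluid orbit with invariant `s` reaches the boundary `x₁ = 0` (that is,
`c = b`), with the convention `k` for the orbits that fall to level `k` before reaching it. -/
noncomputable def exitLevel (b k : ℝ) : ℝ → ℝ :=
  clampedInv (orbitInvariant b) k

variable (hb : 0 < b) (hbk : b < k)
include hb hbk

theorem le_exitLevel : k ≤ exitLevel b k s :=
  le_clampedInv (surjOn_orbitInvariant (hb.trans hbk))

theorem exitLevel_of_le (hs : s ≤ orbitInvariant b k) : exitLevel b k s = k :=
  clampedInv_of_le (strictMonoOn_orbitInvariant (hb.trans hbk) hbk.le) hs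

theorem orbitInvariant_exitLevel (hs : orbitInvariant b k ≤ s) :
    orbitInvariant b (exitLevel b k s) = s :=
  (apply_clampedInv (surjOn_orbitInvariant (hb.trans hbk))).trans (max_eq_left hs)

theorem exitLevel_orbitInvariant (hx : k ≤ x) : exitLevel b k (orbitInvariant b x) = x :=
  clampedInv_apply (strictMonoOn_orbitInvariant (hb.trans hbk) hbk.le) hx

theorem exitLevel_orbitInvariant_le (hc : c ≤ b) (hx : k ≤ x) :
    exitLevel b k (orbitInvariant c x) ≤ x := by
  have hk : 0 < k := hb.trans hbk
  calc exitLevel b k (orbitInvariant c x) ≤ exitLevel b k (orbitInvariant b x) :=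
        monotone_clampedInv (strictMonoOn_orbitInvariant hk hbk.le) (surjOn_orbitInvariant hk)
          (orbitInvariant_le_orbitInvariant (hk.le.trans hx) hc)
    _ = x := exitLevel_orbitInvariant hb hbk hx

theorem continuous_exitLevel : Continuous (exitLevel b k) :=
  continuous_clampedInv (strictMonoOn_orbitInvariant (hb.trans hbk) hbk.le)
    (surjOn_orbitInvariant (hb.trans hbk))

theorem hasDerivAt_exitLevel (hs : orbitInvariant b k < s) :
    HasDerivAt (exitLevel b k) (exitLevel b k s ^ 2 / (exitLevel b k s - b)) s := by
  have hk : 0 < k := hb.trans hbk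
  have hsurj := surjOn_orbitInvariant (c := b) hk
  have hM : k < exitLevel b k s := lt_clampedInv hsurj hs
  have hM0 : exitLevel b k s ≠ 0 := (hk.trans hM).ne'
  rw [← inv_div]
  exact hasDerivAt_clampedInv (strictMonoOn_orbitInvariant hk hbk.le) hsurj hs
    (hasDerivAt_orbitInvariant hM0)
    (div_ne_zero (sub_pos.2 (hbk.trans hM)).ne' (pow_ne_zero 2 hM0))

end ExitLevel

section ExitCost

variable {b k s : ℝ}

/-- The part of the cost that depends only on the orbit: `(M - k)² / (2b)` is the cost accumulated
while descending the boundary at speed `b` from the exit level `M`, and `M - k log M` corrects the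
cost of reaching level `k` along the flow when the orbit leaves it at `M`. -/
noncomputable def exitCost (b k s : ℝ) : ℝ :=
  (exitLevel b k s - k) ^ 2 / (2 * b) - (exitLevel b k s - k * Real.log (exitLevel b k s))

/-- The derivative of `exitCost` in the orbit invariant. -/
noncomputable def exitCostDeriv (b k s : ℝ) : ℝ :=
  exitLevel b k s * (exitLevel b k s - k) / b

/-- The weak second derivative of `exitCost`; it jumps at `s = orbitInvariant b k`, where the value
`0` is chosen. -/
noncomputable def exitCostDeriv₂ (b k s : ℝ) : ℝ :=
  if s ≤ orbitInvariant b k then 0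
  else exitLevel b k s ^ 2 * (2 * exitLevel b k s - k) / (b * (exitLevel b k s - b))

theorem exitCostDeriv₂_of_le (hs : s ≤ orbitInvariant b k) : exitCostDeriv₂ b k s = 0 :=
  if_pos hs

theorem exitCostDeriv₂_of_gt (hs : orbitInvariant b k < s) :
    exitCostDeriv₂ b k s =
      exitLevel b k s ^ 2 * (2 * exitLevel b k s - k) / (b * (exitLevel b k s - b)) :=
  if_neg hs.not_ge

variable (hb : 0 < b) (hbk : b < k)
include hb hbk

theorem exitCostDeriv_of_le (hs : s ≤ orbitInvariant b k) : exitCostDeriv b k s = 0 := by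
  simp only [exitCostDeriv, exitLevel_of_le hb hbk hs, sub_self, mul_zero, zero_div]

theorem continuous_exitCost : Continuous (exitCost b k) := by
  have hM := continuous_exitLevel hb hbk
  have hM0 (s : ℝ) : exitLevel b k s ≠ 0 := ((hb.trans hbk).trans_le (le_exitLevel hb hbk)).ne'
  unfold exitCost
  fun_prop (disch := exact hM0 _)

theorem continuous_exitCostDeriv : Continuous (exitCostDeriv b k) := by
  have hM := continuous_exitLevel hb hbk
  unfold exitCostDeriv
  fun_prop

theorem hasDerivAt_exitCost : HasDerivAt (exitCost b k) (exitCostDeriv b k s) s := by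
  refine hasDerivAt_of_hasDerivAt_of_ne' (x := orbitInvariant b k) (fun t ht ↦ ?_)
    (continuous_exitCost hb hbk).continuousAt (continuous_exitCostDeriv hb hbk).continuousAt s
  rcases lt_or_gt_of_ne ht with hlt | hgt
  · rw [exitCostDeriv_of_le hb hbk hlt.le]
    refine (hasDerivAt_const t (exitCost b k t)).congr_of_eventuallyEq ?_
    filter_upwards [gt_mem_nhds hlt] with u hu
    simp only [exitCost, exitLevel_of_le hb hbk hu.le, exitLevel_of_le hb hbk hlt.le]
  · have hM : k ≤ exitLevel b k t := le_exitLevel hb hbk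
    have hM0 : exitLevel b k t ≠ 0 := by linarith
    have hMb : exitLevel b k t - b ≠ 0 := by linarith
    have hd := hasDerivAt_exitLevel hb hbk hgt
    refine ((((hd.sub_const k).pow 2).div_const (2 * b)).sub
      (hd.sub ((hd.log hM0).const_mul k))).congr_deriv ?_
    unfold exitCostDeriv
    field_simp
    ring

theorem hasDerivAt_exitCostDeriv (hs : s ≠ orbitInvariant b k) :
    HasDerivAt (exitCostDeriv b k) (exitCostDeriv₂ b k s) s := by
  rcases lt_or_gt_of_ne hs with hlt | hgt
  · rw [exitCostDeriv₂_of_le hlt.le]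
    refine (hasDerivAt_const s (0 : ℝ)).congr_of_eventuallyEq ?_
    filter_upwards [gt_mem_nhds hlt] with t ht using exitCostDeriv_of_le hb hbk ht.le
  · have hMb : exitLevel b k s - b ≠ 0 := by linarith [le_exitLevel (s := s) hb hbk]
    have hd := hasDerivAt_exitLevel hb hbk hgt
    refine ((hd.mul (hd.sub_const k)).div_const b).congr_deriv ?_
    rw [exitCostDeriv₂_of_gt hgt]
    field_simp
    ring

theorem exitCostDeriv_nonneg : 0 ≤ exitCostDeriv b k s := by
  have hM : k ≤ exitLevel b k s := le_exitLevel hb hbk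
  exact div_nonneg (mul_nonneg (by linarith) (by linarith)) hb.le

theorem exitCostDeriv_le : exitCostDeriv b k s ≤ exitLevel b k s ^ 2 / b := by
  have hM : k ≤ exitLevel b k s := le_exitLevel hb hbk
  unfold exitCostDeriv
  gcongr
  nlinarith

theorem exitCostDeriv₂_nonneg : 0 ≤ exitCostDeriv₂ b k s := by
  have hM : k ≤ exitLevel b k s := le_exitLevel hb hbk
  unfold exitCostDeriv₂
  split_ifs
  · exact le_rfl
  · exact div_nonneg (mul_nonneg (by positivity) (by linarith)) (mul_nonneg hb.le (by linarith))

theorem exitCostDeriv_le_mul_exitCostDeriv₂ :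
    exitCostDeriv b k s ≤ (1 - b / exitLevel b k s) * exitCostDeriv₂ b k s := by
  rcases le_or_gt s (orbitInvariant b k) with hs | hs
  · rw [exitCostDeriv_of_le hb hbk hs, exitCostDeriv₂_of_le hs, mul_zero]
  · have hM : k ≤ exitLevel b k s := le_exitLevel hb hbk
    rw [exitCostDeriv₂_of_gt hs]
    unfold exitCostDeriv
    generalize exitLevel b k s = M at hM
    have hM0 : 0 < M := by linarith
    have hMb : 0 < M - b := by linarith
    calc M * (M - k) / b ≤ M * (2 * M - k) / b := by gcongr; linarith
      _ = (1 - b / M) * (M ^ 2 * (2 * M - k) / (b * (M - b))) := by field_simp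

theorem exitCostDeriv_le_exitCostDeriv₂ : exitCostDeriv b k s ≤ exitCostDeriv₂ b k s := by
  have hM : 0 < exitLevel b k s := (hb.trans hbk).trans_le (le_exitLevel hb hbk)
  exact (exitCostDeriv_le_mul_exitCostDeriv₂ hb hbk).trans
    (mul_le_of_le_one_left (exitCostDeriv₂_nonneg hb hbk) (sub_le_self 1 (by positivity)))

theorem exitCostDeriv₂_div_sq_le :
    exitCostDeriv₂ b k s / exitLevel b k s ^ 2 ≤ 1 / b * (k / (k - b) + 1) := by
  have hkb : 0 < k - b := sub_pos.2 hbk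
  rcases le_or_gt s (orbitInvariant b k) with hs | hs
  · rw [exitCostDeriv₂_of_le hs, zero_div]
    have hk : 0 < k := hb.trans hbk
    positivity
  · have hM : k ≤ exitLevel b k s := le_exitLevel hb hbk
    rw [exitCostDeriv₂_of_gt hs]
    generalize exitLevel b k s = M at hM
    have hM0 : 0 < M := by linarith
    have hMb : 0 < M - b := by linarith
    calc M ^ 2 * (2 * M - k) / (b * (M - b)) / M ^ 2 = 1 / b * ((2 * M - k) / (M - b)) := by
          field_simp
      _ ≤ 1 / b * (k / (k - b) + 1) := by
          gcongr
          rw [div_add_one hkb.ne', div_le_div_iff₀ hMb hkb]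
          nlinarith [sq_nonneg (k - b)]

end ExitCost

section FluidValue

variable {b c k x : ℝ}

/-- The solution of the fluid PDE for `max (x₂ - k) 0` at heights `x = x₂ ≥ k`, in the shifted
coordinate `c = x₁ + b`. It is the total cost of the reflected fluid path started at the point. -/
noncomputable def fluidValue (b k c x : ℝ) : ℝ :=
  x - k * Real.log x + exitCost b k (orbitInvariant c x)

/-- The partial derivative `∂fluidValue/∂c`. -/
noncomputable def fluidValue₁ (b k c x : ℝ) : ℝ :=
  exitCostDeriv b k (orbitInvariant c x) / x

/-- The partial derivative `∂fluidValue/∂x`. -/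
noncomputable def fluidValue₂ (b k c x : ℝ) : ℝ :=
  1 - k / x + exitCostDeriv b k (orbitInvariant c x) * ((x - c) / x ^ 2)

/-- The weak derivative `∂²fluidValue/∂c²`. -/
noncomputable def fluidValue₁₁ (b k c x : ℝ) : ℝ :=
  exitCostDeriv₂ b k (orbitInvariant c x) / x ^ 2

/-- The weak derivative `∂²fluidValue/∂c∂x`. -/
noncomputable def fluidValue₁₂ (b k c x : ℝ) : ℝ :=
  exitCostDeriv₂ b k (orbitInvariant c x) * ((x - c) / x ^ 2) / x -
    exitCostDeriv b k (orbitInvariant c x) / x ^ 2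

/-- The weak derivative `∂²fluidValue/∂x²`. -/
noncomputable def fluidValue₂₂ (b k c x : ℝ) : ℝ :=
  k / x ^ 2 + exitCostDeriv₂ b k (orbitInvariant c x) * ((x - c) / x ^ 2) ^ 2 +
    exitCostDeriv b k (orbitInvariant c x) * ((2 * c - x) / x ^ 3)

theorem fluidValue₁₁_level (hk : 0 ≤ k) (hc : c ≤ b) : fluidValue₁₁ b k c k = 0 := by
  rw [fluidValue₁₁, exitCostDeriv₂_of_le (orbitInvariant_le_orbitInvariant hk hc), zero_div]

theorem fluidValue_transport (hx : x ≠ 0) :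
    (x - c) * fluidValue₁ b k c x - x * fluidValue₂ b k c x = -(x - k) := by
  unfold fluidValue₁ fluidValue₂
  field_simp
  ring

theorem finite_setOf_orbitInvariant_left_eq (hx : x ≠ 0) (s : ℝ) :
    {c | orbitInvariant c x = s}.Finite := by
  refine Subsingleton.finite fun c hc d hd ↦ ?_
  have h : c / x + Real.log x = d / x + Real.log x := hc.trans hd.symm
  exact (div_left_inj' hx).1 (add_right_cancel h)

theorem finite_setOf_orbitInvariant_eq (hk : 0 < k) (hc : c ≤ k) (s : ℝ) :
    {x ∈ Ici k | orbitInvariant c x = s}.Finite :=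
  Subsingleton.finite fun _ hx _ hy ↦
    (strictMonoOn_orbitInvariant hk hc).injOn hx.1 hy.1 (hx.2.trans hy.2.symm)

variable (hb : 0 < b) (hbk : b < k)
include hb hbk

theorem fluidValue₁_level (hc : c ≤ b) : fluidValue₁ b k c k = 0 := by
  rw [fluidValue₁, exitCostDeriv_of_le hb hbk
    (orbitInvariant_le_orbitInvariant (hb.trans hbk).le hc), zero_div]

theorem fluidValue₂_level (hc : c ≤ b) : fluidValue₂ b k c k = 0 := by
  have hk : 0 < k := hb.trans hbk
  rw [fluidValue₂, exitCostDeriv_of_le hb hbk (orbitInvariant_le_orbitInvariant hk.le hc),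
    div_self hk.ne', sub_self, zero_mul, add_zero]

theorem fluidValue₁_eq_fluidValue₂_boundary (hx : k ≤ x) :
    fluidValue₁ b k b x = fluidValue₂ b k b x := by
  have hx0 : x ≠ 0 := by linarith
  simp only [fluidValue₁, fluidValue₂, exitCostDeriv, exitLevel_orbitInvariant hb hbk hx]
  field_simp
  ring

theorem hasDerivAt_fluidValue_left :
    HasDerivAt (fun c ↦ fluidValue b k c x) (fluidValue₁ b k c x) c := by
  refine (((hasDerivAt_exitCost hb hbk).comp c hasDerivAt_orbitInvariant_left).const_add
    (x - k * Real.log x)).congr_deriv ?_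
  rw [mul_one_div, fluidValue₁]

theorem hasDerivAt_fluidValue_right (hx : x ≠ 0) :
    HasDerivAt (fluidValue b k c) (fluidValue₂ b k c x) x :=
  ((hasDerivAt_id x).sub ((Real.hasDerivAt_log hx).const_mul k)).add
    ((hasDerivAt_exitCost hb hbk).comp x (hasDerivAt_orbitInvariant hx))

theorem hasDerivAt_fluidValue₁_left (hs : orbitInvariant c x ≠ orbitInvariant b k) :
    HasDerivAt (fun c ↦ fluidValue₁ b k c x) (fluidValue₁₁ b k c x) c := by
  refine (((hasDerivAt_exitCostDeriv hb hbk hs).comp c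
    hasDerivAt_orbitInvariant_left).div_const x).congr_deriv ?_
  rw [mul_one_div, div_div, ← sq, fluidValue₁₁]

theorem hasDerivAt_fluidValue₁_right (hx : x ≠ 0)
    (hs : orbitInvariant c x ≠ orbitInvariant b k) :
    HasDerivAt (fluidValue₁ b k c) (fluidValue₁₂ b k c x) x := by
  refine (((hasDerivAt_exitCostDeriv hb hbk hs).comp x (hasDerivAt_orbitInvariant hx)).div
    (hasDerivAt_id x) hx).congr_deriv ?_
  simp only [Function.comp_apply, id, fluidValue₁₂]
  field_simp

theorem hasDerivAt_fluidValue₂_right (hx : x ≠ 0)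
    (hs : orbitInvariant c x ≠ orbitInvariant b k) :
    HasDerivAt (fluidValue₂ b k c) (fluidValue₂₂ b k c x) x := by
  have hslope : HasDerivAt (fun t ↦ (t - c) / t ^ 2) ((2 * c - x) / x ^ 3) x := by
    refine (((hasDerivAt_id x).sub_const c).div ((hasDerivAt_id x).pow 2)
      (pow_ne_zero 2 hx)).congr_deriv ?_
    simp only [id, Pi.pow_apply]
    field_simp
    ring
  refine ((((hasDerivAt_const x k).div (hasDerivAt_id x) hx).const_sub 1).add
    (((hasDerivAt_exitCostDeriv hb hbk hs).comp x (hasDerivAt_orbitInvariant hx)).mul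
      hslope)).congr_deriv ?_
  simp only [Function.comp_apply, id, fluidValue₂₂]
  ring

theorem continuousOn_exitCostDeriv_orbitInvariant :
    ContinuousOn (fun x ↦ exitCostDeriv b k (orbitInvariant c x)) (Ici k) :=
  (continuous_exitCostDeriv hb hbk).comp_continuousOn
    (continuousOn_orbitInvariant (hb.trans hbk))

theorem fluidValue₁₁_nonneg : 0 ≤ fluidValue₁₁ b k c x :=
  div_nonneg (exitCostDeriv₂_nonneg hb hbk) (sq_nonneg x)

theorem fluidValue₁₂_nonneg (hc : c ≤ b) (hx : k ≤ x) : 0 ≤ fluidValue₁₂ b k c x := by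
  have hM : k ≤ exitLevel b k (orbitInvariant c x) := le_exitLevel hb hbk
  have hMx := exitLevel_orbitInvariant_le hb hbk hc hx
  have hle := exitCostDeriv_le_mul_exitCostDeriv₂ (s := orbitInvariant c x) hb hbk
  have hnonneg := exitCostDeriv₂_nonneg (s := orbitInvariant c x) hb hbk
  unfold fluidValue₁₂
  generalize exitLevel b k (orbitInvariant c x) = M at hM hMx hle
  generalize exitCostDeriv b k (orbitInvariant c x) = ψ at hle
  generalize exitCostDeriv₂ b k (orbitInvariant c x) = χ at hle hnonneg
  have hM0 : 0 < M := by linarith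
  have hx0 : 0 < x := by linarith
  have hψ : ψ ≤ (1 - c / x) * χ := hle.trans (by gcongr)
  calc 0 ≤ ((1 - c / x) * χ - ψ) / x ^ 2 := div_nonneg (sub_nonneg.2 hψ) (sq_nonneg x)
    _ = χ * ((x - c) / x ^ 2) / x - ψ / x ^ 2 := by field_simp

theorem fluidValue₂₂_nonneg (hx : k ≤ x) : 0 ≤ fluidValue₂₂ b k c x := by
  have hle := exitCostDeriv_le_exitCostDeriv₂ (s := orbitInvariant c x) hb hbk
  have hnonneg := exitCostDeriv_nonneg (s := orbitInvariant c x) hb hbk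
  unfold fluidValue₂₂
  generalize exitCostDeriv b k (orbitInvariant c x) = ψ at hle hnonneg
  generalize exitCostDeriv₂ b k (orbitInvariant c x) = χ at hle
  have hk : 0 < k := hb.trans hbk
  have hx0 : 0 < x := hk.trans_le hx
  -- The idea is `(2 * c - x) / x ^ 3 = (c / x ^ 2) ^ 2 - ((x - c) / x ^ 2) ^ 2`.
  calc 0 ≤ k / x ^ 2 + (χ - ψ) * ((x - c) / x ^ 2) ^ 2 + ψ * (c / x ^ 2) ^ 2 := by
        have : 0 ≤ χ - ψ := sub_nonneg.2 hle
        positivity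
    _ = k / x ^ 2 + χ * ((x - c) / x ^ 2) ^ 2 + ψ * ((2 * c - x) / x ^ 3) := by
        field_simp
        ring

theorem fluidValue₁₁_le (hc : c ≤ b) (hx : k ≤ x) :
    fluidValue₁₁ b k c x ≤ 1 / b * (k / (k - b) + 1) := by
  have hM : 0 < exitLevel b k (orbitInvariant c x) :=
    (hb.trans hbk).trans_le (le_exitLevel hb hbk)
  refine le_trans ?_ (exitCostDeriv₂_div_sq_le (s := orbitInvariant c x) hb hbk)
  exact div_le_div_of_nonneg_left (exitCostDeriv₂_nonneg hb hbk) (by positivity)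
    (pow_le_pow_left₀ hM.le (exitLevel_orbitInvariant_le hb hbk hc hx) 2)

theorem exitCostDeriv₂_mul_slope_sq_le (hc : c ≤ x) (hx : 0 < x) :
    exitCostDeriv₂ b k (orbitInvariant c x) * ((x - c) / x ^ 2) ^ 2 ≤
      1 / b * (k / (k - b) + 1) := by
  refine le_trans ?_ (exitCostDeriv₂_div_sq_le (s := orbitInvariant c x) hb hbk)
  rcases le_or_gt (orbitInvariant c x) (orbitInvariant b k) with hs | hs
  · rw [exitCostDeriv₂_of_le hs, zero_mul, zero_div]
  · have hM : 0 < exitLevel b k (orbitInvariant c x) :=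
      (hb.trans hbk).trans_le (le_exitLevel hb hbk)
    have hslope := sub_div_sq_le_of_orbitInvariant_eq hb.le hx hM
      (orbitInvariant_exitLevel hb hbk hs.le)
    have hslope0 : 0 ≤ (x - c) / x ^ 2 := div_nonneg (sub_nonneg.2 hc) (sq_nonneg x)
    rw [div_eq_mul_one_div _ (exitLevel b k _ ^ 2), ← one_div_pow]
    exact mul_le_mul_of_nonneg_left (pow_le_pow_left₀ hslope0 hslope 2)
      (exitCostDeriv₂_nonneg hb hbk)

theorem exitCostDeriv_mul_le (hc : c ≤ b) (hx : k ≤ x) :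
    exitCostDeriv b k (orbitInvariant c x) * ((2 * c - x) / x ^ 3) ≤ 1 / b := by
  have hk : 0 < k := hb.trans hbk
  have hx0 : 0 < x := hk.trans_le hx
  have hM : 0 < exitLevel b k (orbitInvariant c x) := hk.trans_le (le_exitLevel hb hbk)
  have hMx := exitLevel_orbitInvariant_le hb hbk hc hx
  calc exitCostDeriv b k (orbitInvariant c x) * ((2 * c - x) / x ^ 3)
      ≤ exitCostDeriv b k (orbitInvariant c x) * (x / x ^ 3) := by
        have := exitCostDeriv_nonneg (s := orbitInvariant c x) hb hbk
        gcongr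
        linarith
    _ ≤ x ^ 2 / b * (x / x ^ 3) := by
        gcongr
        exact (exitCostDeriv_le hb hbk).trans (by gcongr)
    _ = 1 / b := by field_simp

theorem fluidValue₂₂_le (hc : c ≤ b) (hx : k ≤ x) :
    fluidValue₂₂ b k c x ≤ 1 / b * (3 + k / (k - b)) := by
  have hx0 : 0 < x := by linarith
  have hrunning : k / x ^ 2 ≤ 1 / b := by
    rw [div_le_div_iff₀ (by positivity) hb]
    nlinarith
  have hslope := exitCostDeriv₂_mul_slope_sq_le (c := c) hb hbk (by linarith) hx0
  have hcurv := exitCostDeriv_mul_le hb hbk hc hx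
  unfold fluidValue₂₂
  linarith

theorem hasWeakDeriv_fluidValue₁_left (hx : x ≠ 0) :
    HasWeakDeriv (fun c ↦ fluidValue₁ b k c x) (fun c ↦ fluidValue₁₁ b k c x) := by
  have hcont : Continuous fun c ↦ fluidValue₁ b k c x :=
    ((continuous_exitCostDeriv hb hbk).comp
      (continuous_iff_continuousAt.2 fun c ↦
        hasDerivAt_orbitInvariant_left.continuousAt)).div_const x
  exact hasWeakDeriv_of_hasDerivAt_off_finite_of_nonneg hcont
    (finite_setOf_orbitInvariant_left_eq hx (orbitInvariant b k))
    (fun c hc ↦ hasDerivAt_fluidValue₁_left hb hbk hc) fun c ↦ fluidValue₁₁_nonneg hb hbk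

theorem hasWeakDeriv_fluidValue₁_comp_max (hc : c ≤ b) :
    HasWeakDeriv (fun x ↦ fluidValue₁ b k c (max x k))
      ((Ioi k).indicator (fluidValue₁₂ b k c)) := by
  have hk : 0 < k := hb.trans hbk
  refine hasWeakDeriv_comp_max
    ((continuousOn_exitCostDeriv_orbitInvariant hb hbk).div continuousOn_id
      fun x hx ↦ (hk.trans_le hx).ne')
    (finite_setOf_orbitInvariant_eq hk (hc.trans hbk.le) (orbitInvariant b k)) (fun x hx ↦ ?_)
    fun x hx ↦ fluidValue₁₂_nonneg hb hbk hc (le_of_lt hx)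
  exact hasDerivAt_fluidValue₁_right hb hbk (hk.trans hx.1).ne'
    fun h ↦ hx.2 ⟨Ioi_subset_Ici_self hx.1, h⟩

theorem hasWeakDeriv_fluidValue₂_comp_max (hc : c ≤ b) :
    HasWeakDeriv (fun x ↦ fluidValue₂ b k c (max x k))
      ((Ioi k).indicator (fluidValue₂₂ b k c)) := by
  have hk : 0 < k := hb.trans hbk
  have hcont : ContinuousOn (fluidValue₂ b k c) (Ici k) := by
    have hx0 (x : ℝ) (hx : x ∈ Ici k) : x ≠ 0 := (hk.trans_le hx).ne'
    exact (continuousOn_const.sub (continuousOn_const.div continuousOn_id hx0)).add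
      ((continuousOn_exitCostDeriv_orbitInvariant hb hbk).mul
        ((continuousOn_id.sub continuousOn_const).div (continuousOn_id.pow 2)
          fun x hx ↦ pow_ne_zero 2 (hx0 x hx)))
  refine hasWeakDeriv_comp_max hcont
    (finite_setOf_orbitInvariant_eq hk (hc.trans hbk.le) (orbitInvariant b k)) (fun x hx ↦ ?_)
    fun x hx ↦ fluidValue₂₂_nonneg hb hbk (le_of_lt hx)
  exact hasDerivAt_fluidValue₂_right hb hbk (hk.trans hx.1).ne'
    fun h ↦ hx.2 ⟨Ioi_subset_Ici_self hx.1, h⟩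

theorem fluidValue_transport_comp_max (hc : c ≤ b) :
    (x - c) * fluidValue₁ b k c (max x k) - x * fluidValue₂ b k c (max x k) =
      -max (x - k) 0 := by
  rcases le_total x k with hx | hx
  · rw [max_eq_right hx, max_eq_right (sub_nonpos.2 hx), fluidValue₁_level hb hbk hc,
      fluidValue₂_level hb hbk hc]
    ring
  · rw [max_eq_left hx, max_eq_left (sub_nonneg.2 hx),
      fluidValue_transport ((hb.trans hbk).trans_le hx).ne']

theorem hasDerivAt_fluidValue_comp_max (hc : c ≤ b) :
    HasDerivAt (fun x ↦ fluidValue b k c (max x k)) (fluidValue₂ b k c (max x k)) x :=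
  hasDerivAt_comp_max
    (fun _ hy ↦ hasDerivAt_fluidValue_right hb hbk ((hb.trans hbk).trans_le hy).ne')
    (fluidValue₂_level hb hbk hc) x

theorem indicator_fluidValue₁₂_nonneg (hc : c ≤ b) :
    0 ≤ (Ioi k).indicator (fluidValue₁₂ b k c) x :=
  indicator_nonneg (fun _ hy ↦ fluidValue₁₂_nonneg hb hbk hc (le_of_lt hy)) x

theorem indicator_fluidValue₂₂_nonneg : 0 ≤ (Ioi k).indicator (fluidValue₂₂ b k c) x :=
  indicator_nonneg (fun _ hy ↦ fluidValue₂₂_nonneg hb hbk (le_of_lt hy)) x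

theorem indicator_fluidValue₂₂_le (hc : c ≤ b) :
    (Ioi k).indicator (fluidValue₂₂ b k c) x ≤ 1 / b * (3 + k / (k - b)) := by
  have hfrac : 0 < k / (k - b) := div_pos (hb.trans hbk) (sub_pos.2 hbk)
  exact indicator_apply_le' (fun hx ↦ fluidValue₂₂_le hb hbk hc (le_of_lt hx))
    fun _ ↦ by positivity

end FluidValue

section FluidSolution

/-- `f` solves the fluid PDE `L f = -h` on `Ω`, where `b` stands for `β / √n`, and its first-order
partial derivatives `f₁`, `f₂` are absolutely continuous along the coordinate segments of `Ω`, with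
weak derivatives `f₁₁`, `f₁₂`, `f₂₂`. -/
structure IsFluidSolution (b : ℝ) (h f f₁ f₂ f₁₁ f₁₂ f₂₂ : ℝ → ℝ → ℝ) : Prop where
  hasDerivWithinAt : ∀ x₁ ≤ 0, ∀ x₂, 0 ≤ x₂ →
    HasDerivWithinAt (fun t ↦ f t x₂) (f₁ x₁ x₂) (Iic 0) x₁ ∧
      HasDerivWithinAt (fun t ↦ f x₁ t) (f₂ x₁ x₂) (Ici 0) x₂
  weakDeriv₁₁ : ∀ x₂, 0 ≤ x₂ → ∀ a ≤ 0, ∀ d ≤ 0,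
    IntervalIntegrable (fun u ↦ f₁₁ u x₂) volume a d ∧
      f₁ d x₂ - f₁ a x₂ = ∫ u in a..d, f₁₁ u x₂
  weakDeriv₁₂ : ∀ x₁ ≤ 0, ∀ a d, 0 ≤ a → 0 ≤ d →
    IntervalIntegrable (fun u ↦ f₁₂ x₁ u) volume a d ∧
      f₁ x₁ d - f₁ x₁ a = ∫ u in a..d, f₁₂ x₁ u
  weakDeriv₂₂ : ∀ x₁ ≤ 0, ∀ a d, 0 ≤ a → 0 ≤ d →
    IntervalIntegrable (fun u ↦ f₂₂ x₁ u) volume a d ∧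
      f₂ x₁ d - f₂ x₁ a = ∫ u in a..d, f₂₂ x₁ u
  transport : ∀ x₁ ≤ 0, ∀ x₂, 0 ≤ x₂ →
    (-x₁ + x₂ - b) * f₁ x₁ x₂ - x₂ * f₂ x₁ x₂ = -h x₁ x₂
  boundary : ∀ x₂, 0 ≤ x₂ → f₁ 0 x₂ = f₂ 0 x₂

theorem isFluidSolution_fluidValue {b k : ℝ} (hb : 0 < b) (hbk : b < k) :
    IsFluidSolution b (fun _ x₂ ↦ max (x₂ - k) 0)
      (fun x₁ x₂ ↦ fluidValue b k (x₁ + b) (max x₂ k))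
      (fun x₁ x₂ ↦ fluidValue₁ b k (x₁ + b) (max x₂ k))
      (fun x₁ x₂ ↦ fluidValue₂ b k (x₁ + b) (max x₂ k))
      (fun x₁ x₂ ↦ fluidValue₁₁ b k (x₁ + b) (max x₂ k))
      (fun x₁ ↦ (Ioi k).indicator (fluidValue₁₂ b k (x₁ + b)))
      (fun x₁ ↦ (Ioi k).indicator (fluidValue₂₂ b k (x₁ + b))) where
  hasDerivWithinAt x₁ hx₁ _ _ :=
    ⟨((hasDerivAt_fluidValue_left hb hbk).comp_add_const x₁ b).hasDerivWithinAt,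
      (hasDerivAt_fluidValue_comp_max hb hbk (add_le_of_nonpos_left hx₁)).hasDerivWithinAt⟩
  weakDeriv₁₁ x₂ _ a _ d _ :=
    (hasWeakDeriv_fluidValue₁_left hb hbk
      ((hb.trans hbk).trans_le (le_max_right x₂ k)).ne').comp_add_const b a d
  weakDeriv₁₂ _ hx₁ a d _ _ :=
    hasWeakDeriv_fluidValue₁_comp_max hb hbk (add_le_of_nonpos_left hx₁) a d
  weakDeriv₂₂ _ hx₁ a d _ _ :=
    hasWeakDeriv_fluidValue₂_comp_max hb hbk (add_le_of_nonpos_left hx₁) a d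
  transport x₁ hx₁ x₂ _ := by
    rw [← fluidValue_transport_comp_max hb hbk (add_le_of_nonpos_left hx₁)]
    ring
  boundary x₂ _ := by
    simpa only [zero_add] using fluidValue₁_eq_fluidValue₂_boundary hb hbk (le_max_right x₂ k)

end FluidSolution

/-- Lemma `cor:derivs`.  Fix `n ≥ 1`, `β > 0` and `κ > β`, and let
`h(x) = max(x₂ - κ/√n, 0)`.  There is a solution `f` of the fluid PDE for `h` on
`Ω = (-∞,0] × [0,∞)` with absolutely continuous first-order partial derivatives:
`f1, f2` are the (one-sided at the boundary) partial derivatives of `f`, and the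
second-order weak derivatives `f11, f12, f22` (given by the integral representations
along coordinate segments of `Ω`) satisfy (i) nonnegativity on `Ω`, (ii) `f11 = f22 = 0`
for `x₂ ∈ [0, κ/√n]`, and (iii) the stated upper bounds for `x₂ ≥ κ/√n`. -/
theorem stmt4 (n : ℕ) (hn : 1 ≤ n) (β κ : ℝ) (hβ : 0 < β) (hκ : β < κ) :
    ∃ f f1 f2 f11 f12 f22 : ℝ → ℝ → ℝ,
      -- f1, f2 are the first-order (one-sided) partial derivatives of f on Ω
      (∀ x1 ≤ (0 : ℝ), ∀ x2 : ℝ, 0 ≤ x2 →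
        HasDerivWithinAt (fun t => f t x2) (f1 x1 x2) (Set.Iic 0) x1 ∧
          HasDerivWithinAt (fun t => f x1 t) (f2 x1 x2) (Set.Ici 0) x2) ∧
      -- f1 is absolutely continuous in x1 with weak derivative f11
      (∀ x2 : ℝ, 0 ≤ x2 → ∀ a ≤ (0 : ℝ), ∀ b ≤ (0 : ℝ),
        IntervalIntegrable (fun u => f11 u x2) volume a b ∧
          f1 b x2 - f1 a x2 = ∫ u in a..b, f11 u x2) ∧
      -- f1 is absolutely continuous in x2 with weak derivative f12
      (∀ x1 ≤ (0 : ℝ), ∀ a b : ℝ, 0 ≤ a → 0 ≤ b →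
        IntervalIntegrable (fun u => f12 x1 u) volume a b ∧
          f1 x1 b - f1 x1 a = ∫ u in a..b, f12 x1 u) ∧
      -- f2 is absolutely continuous in x2 with weak derivative f22
      (∀ x1 ≤ (0 : ℝ), ∀ a b : ℝ, 0 ≤ a → 0 ≤ b →
        IntervalIntegrable (fun u => f22 x1 u) volume a b ∧
          f2 x1 b - f2 x1 a = ∫ u in a..b, f22 x1 u) ∧
      -- f solves the fluid PDE for h(x) = max(x2 - κ/√n, 0)
      (∀ x1 ≤ (0 : ℝ), ∀ x2 : ℝ, 0 ≤ x2 →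
        (-x1 + x2 - β / Real.sqrt n) * f1 x1 x2 - x2 * f2 x1 x2 =
          -max (x2 - κ / Real.sqrt n) 0) ∧
      (∀ x2 : ℝ, 0 ≤ x2 → f1 0 x2 = f2 0 x2) ∧
      -- (i) nonnegativity of the second-order weak derivatives on Ω
      (∀ x1 ≤ (0 : ℝ), ∀ x2 : ℝ, 0 ≤ x2 →
        0 ≤ f11 x1 x2 ∧ 0 ≤ f12 x1 x2 ∧ 0 ≤ f22 x1 x2) ∧
      -- (ii) vanishing for x2 ∈ [0, κ/√n]
      (∀ x1 ≤ (0 : ℝ), ∀ x2 : ℝ, 0 ≤ x2 → x2 ≤ κ / Real.sqrt n →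
        f11 x1 x2 = 0 ∧ f22 x1 x2 = 0) ∧
      -- (iii) upper bounds for x2 ≥ κ/√n
      (∀ x1 ≤ (0 : ℝ), ∀ x2 : ℝ, κ / Real.sqrt n ≤ x2 →
        f11 x1 x2 ≤ Real.sqrt n / β * (κ / (κ - β) + 1) ∧
          f22 x1 x2 ≤ Real.sqrt n / β * (5 + 2 * κ / (κ - β))) := by
  have hn' : 0 < √(n : ℝ) := Real.sqrt_pos.2 (Nat.cast_pos.2 hn)
  set b := β / √n with hb_def
  set k := κ / √n with hk_def
  have hb : 0 < b := div_pos hβ hn'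
  have hbk : b < k := div_lt_div_of_pos_right hκ hn'
  have hfrac : κ / (κ - β) = k / (k - b) := by
    rw [hb_def, hk_def, ← sub_div, div_div_div_cancel_right₀ hn'.ne']
  have hfrac_pos : 0 < k / (k - b) := div_pos (hb.trans hbk) (sub_pos.2 hbk)
  have hc {x1 : ℝ} (hx1 : x1 ≤ 0) : x1 + b ≤ b := add_le_of_nonpos_left hx1
  rw [mul_div_assoc, hfrac, ← one_div_div β, ← hb_def]
  have hf := isFluidSolution_fluidValue hb hbk
  refine ⟨_, _, _, _, _, _, hf.hasDerivWithinAt, hf.weakDeriv₁₁, hf.weakDeriv₁₂, hf.weakDeriv₂₂,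
    hf.transport, hf.boundary, fun x1 hx1 x2 _ ↦ ⟨fluidValue₁₁_nonneg hb hbk,
      indicator_fluidValue₁₂_nonneg hb hbk (hc hx1), indicator_fluidValue₂₂_nonneg hb hbk⟩,
    fun x1 hx1 x2 _ hx2 ↦ ⟨?_, indicator_of_notMem (notMem_Ioi.2 hx2) _⟩,
    fun x1 hx1 x2 _ ↦ ⟨fluidValue₁₁_le hb hbk (hc hx1) (le_max_right x2 k), ?_⟩⟩
  · simpa only [max_eq_right hx2] using fluidValue₁₁_level (hb.trans hbk).le (hc hx1)
  · exact (indicator_fluidValue₂₂_le hb hbk (hc hx1)).trans (by gcongr <;> linarith)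
end

section
/- Fix κ ≥ β and x_1 ≤ 0. The nonlinear system −β/√n + (x_1 + β/√n)e^{−η} + η ν e^{−η} = 0, ν e^{−η} = κ/√n, ν ≥ κ/√n, η ≥ 0 has exactly one solution (ν, η). -/
/-!
The second equation gives `ν = k e^η`, and substituting it in the first leaves one equation
`f η = -b + (x + b) e^{-η} + k η = 0` on `[0, ∞)`. Here `f 0 = x ≤ 0` and `f → ∞`, so there is a
root. At a root `s` the slope is `f' s = k (1 + s) - b`. It is nonnegative: for `s > 0` because
`1 + s ≤ e^s`, and for `s = 0` because then `x = 0` and `b ≤ k`. For `u > 0` we have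
`f (s + u) = k u - (b - k s) (1 - e^{-u})`, which is positive because `b - k s ≤ k` and
`0 < 1 - e^{-u} < u`. So there is no second root to the right of a root.
-/

open Set Filter

/-- The left-hand side of the first equation of the system after the substitution `ν e^{-η} = k`,
as a function of `η`. The parameters `b` and `k` stand for `β / √n` and `κ / √n`. -/
noncomputable def reducedLHS (b k x η : ℝ) : ℝ :=
  -b + (x + b) * Real.exp (-η) + k * η

section ReducedEquation

variable {b k x : ℝ}

lemma reducedLHS_zero (b k x : ℝ) : reducedLHS b k x 0 = x := by
  simp [reducedLHS]

lemma continuous_reducedLHS (b k x : ℝ) : Continuous (reducedLHS b k x) := by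
  unfold reducedLHS
  fun_prop

lemma tendsto_reducedLHS_atTop (b x : ℝ) (hk : 0 < k) :
    Tendsto (reducedLHS b k x) atTop atTop :=
  ((Real.tendsto_exp_neg_atTop_nhds_zero.const_mul (x + b)).const_add (-b)).add_atTop
    (tendsto_id.const_mul_atTop hk)

lemma exists_reducedLHS_eq_zero (b : ℝ) (hk : 0 < k) (hx : x ≤ 0) :
    ∃ η, 0 ≤ η ∧ reducedLHS b k x η = 0 :=
  isPreconnected_Ici.intermediate_value_Ici self_mem_Ici
    (le_principal_iff.2 (Ici_mem_atTop 0)) (continuous_reducedLHS b k x).continuousOn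
    (tendsto_reducedLHS_atTop b x hk) ((reducedLHS_zero b k x).trans_le hx)

lemma le_mul_one_add_of_reducedLHS_eq_zero (hk : 0 ≤ k) (hx : x ≤ 0) (hb : x = 0 → b ≤ k)
    {s : ℝ} (hs : 0 ≤ s) (hroot : reducedLHS b k x s = 0) : b ≤ k * (1 + s) := by
  rcases hs.eq_or_lt with rfl | hs
  · simpa using hb ((reducedLHS_zero b k x).symm.trans hroot)
  · have hexp : Real.exp (-s) < 1 := Real.exp_lt_one_iff.2 (neg_lt_zero.2 hs)
    have hone_add : (1 + s) * Real.exp (-s) ≤ 1 := by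
      rw [Real.exp_neg, ← div_eq_mul_inv, div_le_one (Real.exp_pos s), add_comm]
      exact Real.add_one_le_exp s
    refine le_of_mul_le_mul_right ?_ (sub_pos.2 hexp)
    calc b * (1 - Real.exp (-s)) = x * Real.exp (-s) + k * s := by
          unfold reducedLHS at hroot
          linear_combination -hroot
      _ ≤ k * s := add_le_of_nonpos_left (mul_nonpos_of_nonpos_of_nonneg hx (Real.exp_nonneg _))
      _ ≤ k * (1 + s - (1 + s) * Real.exp (-s)) := by gcongr; linarith
      _ = k * (1 + s) * (1 - Real.exp (-s)) := by ring

lemma reducedLHS_eq_of_root {s : ℝ} (hroot : reducedLHS b k x s = 0) (t : ℝ) :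
    reducedLHS b k x t = k * (t - s) - (b - k * s) * (1 - Real.exp (-(t - s))) := by
  have hexp : Real.exp (-t) = Real.exp (-s) * Real.exp (-(t - s)) := by
    rw [← Real.exp_add]
    ring_nf
  unfold reducedLHS at hroot ⊢
  rw [hexp]
  linear_combination Real.exp (-(t - s)) * hroot

lemma reducedLHS_pos_of_root_lt (hk : 0 < k) {s t : ℝ} (hroot : reducedLHS b k x s = 0)
    (hb : b ≤ k * (1 + s)) (hst : s < t) : 0 < reducedLHS b k x t := by
  have hlt : 1 - Real.exp (-(t - s)) < t - s := by
    linarith [Real.add_one_lt_exp (neg_ne_zero.2 (sub_pos.2 hst).ne')]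
  have hnonneg : 0 ≤ 1 - Real.exp (-(t - s)) :=
    sub_nonneg.2 (Real.exp_le_one_iff.2 (by linarith))
  rw [reducedLHS_eq_of_root hroot, sub_pos]
  calc (b - k * s) * (1 - Real.exp (-(t - s))) ≤ k * (1 - Real.exp (-(t - s))) := by
        gcongr
        linarith
    _ < k * (t - s) := by gcongr

lemma existsUnique_reducedLHS_eq_zero (hk : 0 < k) (hx : x ≤ 0) (hb : x = 0 → b ≤ k) :
    ∃! η, 0 ≤ η ∧ reducedLHS b k x η = 0 := by
  have not_root_lt {s t : ℝ} (hs : 0 ≤ s) (hs_root : reducedLHS b k x s = 0)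
      (ht_root : reducedLHS b k x t = 0) : ¬s < t := fun hst =>
    (reducedLHS_pos_of_root_lt hk hs_root
      (le_mul_one_add_of_reducedLHS_eq_zero hk.le hx hb hs hs_root) hst).ne' ht_root
  obtain ⟨η, hη, hη_root⟩ := exists_reducedLHS_eq_zero b hk hx
  refine ⟨η, ⟨hη, hη_root⟩, fun t ⟨ht, ht_root⟩ => ?_⟩
  exact le_antisymm (not_lt.1 (not_root_lt hη hη_root ht_root))
    (not_lt.1 (not_root_lt ht ht_root hη_root))

lemma system_iff_reducedLHS_eq_zero (b x : ℝ) (hk : 0 ≤ k) (ν η : ℝ) :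
    (k ≤ ν ∧ 0 ≤ η ∧
      -b + (x + b) * Real.exp (-η) + η * ν * Real.exp (-η) = 0 ∧ ν * Real.exp (-η) = k) ↔
      (0 ≤ η ∧ reducedLHS b k x η = 0) ∧ ν = k * Real.exp η := by
  have hν : ν * Real.exp (-η) = k ↔ ν = k * Real.exp η := by
    rw [Real.exp_neg, mul_inv_eq_iff_eq_mul₀ (Real.exp_ne_zero η)]
  have hsubst (h : ν * Real.exp (-η) = k) :
      -b + (x + b) * Real.exp (-η) + η * ν * Real.exp (-η) = reducedLHS b k x η := by
    unfold reducedLHS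
    linear_combination η * h
  constructor
  · rintro ⟨-, hη, hfirst, hsecond⟩
    exact ⟨⟨hη, hsubst hsecond ▸ hfirst⟩, hν.1 hsecond⟩
  · rintro ⟨⟨hη, hroot⟩, hν_eq⟩
    have hsecond := hν.2 hν_eq
    exact ⟨hν_eq ▸ le_mul_of_one_le_right hk (Real.one_le_exp hη), hη,
      (hsubst hsecond).trans hroot, hsecond⟩

end ReducedEquation

theorem stmt5_general {b k x : ℝ} (hk : 0 < k) (hx : x ≤ 0) (hb : x = 0 → b ≤ k) :
    ∃! p : ℝ × ℝ,
      k ≤ p.1 ∧ 0 ≤ p.2 ∧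
        -b + (x + b) * Real.exp (-p.2) + p.2 * p.1 * Real.exp (-p.2) = 0 ∧
        p.1 * Real.exp (-p.2) = k := by
  simp only [system_iff_reducedLHS_eq_zero b x hk.le]
  obtain ⟨η, hη, huniq⟩ := existsUnique_reducedLHS_eq_zero hk hx hb
  refine ⟨(k * Real.exp η, η), ⟨hη, rfl⟩, ?_⟩
  rintro ⟨ν, s⟩ ⟨hs, rfl : ν = k * Real.exp s⟩
  rw [huniq s hs]

/-- Lemma `gamma`, first claim.  Fix `n ≥ 1`, `β > 0`, `κ ≥ β` and
`x₁ ≤ 0`.  The nonlinear system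
`-β/√n + (x₁ + β/√n)e^{-η} + η ν e^{-η} = 0`, `ν e^{-η} = κ/√n`,
`ν ≥ κ/√n`, `η ≥ 0` has exactly one solution `(ν, η)`. -/
theorem stmt5 (n : ℕ) (hn : 1 ≤ n) (β κ : ℝ) (hβ : 0 < β) (hκ : β ≤ κ)
    (x1 : ℝ) (hx1 : x1 ≤ 0) :
    ∃! p : ℝ × ℝ,
      κ / Real.sqrt n ≤ p.1 ∧ 0 ≤ p.2 ∧
        -(β / Real.sqrt n) + (x1 + β / Real.sqrt n) * Real.exp (-p.2) +
            p.2 * p.1 * Real.exp (-p.2) = 0 ∧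
        p.1 * Real.exp (-p.2) = κ / Real.sqrt n :=
  stmt5_general (div_pos (hβ.trans_le hκ) (Real.sqrt_pos.2 (Nat.cast_pos.2 hn))) hx1
    fun _ => div_le_div_of_nonneg_right hκ (Real.sqrt_nonneg n)
end

section
/- For every x_1 ≤ 0 and every t ∈ [0, η*(x_1)], the point (−β/√n + (x_1 + β/√n)e^{−t} + t·ν*(x_1)·e^{−t}, ν*(x_1)·e^{−t}) lies on the curve Γ^(κ); equivalently, its second coordinate equals ν* evaluated at its first coordinate. -/
/-- `(ν, η)` solves the nonlinear system of Lemma `gamma` for initial value `x₁`. -/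
def GammaSol (n : ℕ) (β κ x1 ν η : ℝ) : Prop :=
  κ / Real.sqrt n ≤ ν ∧ 0 ≤ η ∧
    -(β / Real.sqrt n) + (x1 + β / Real.sqrt n) * Real.exp (-η) +
        η * ν * Real.exp (-η) = 0 ∧
    ν * Real.exp (-η) = κ / Real.sqrt n

/-! The equations defining `(ν*(x₁), η*(x₁))` say that the flow of the linear system
`x₁' = -(x₁ + b) + x₂`, `x₂' = -x₂`, with `b = β/√n`, carries `(x₁, ν*(x₁))` to `(0, κ/√n)` in time
`η*(x₁)`. So `Γ^(κ)` is the backward orbit of `(0, κ/√n)`, and a point of `Γ^(κ)` moved forward by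
`t ≤ η*(x₁)` is again on this backward orbit, at time `η*(x₁) - t`. At backward time `s > 0` the
first coordinate of this orbit has derivative `(b - k - s k) e^s < 0`, where `k = κ/√n`; so it
decreases strictly from `0`, and therefore stays nonpositive and determines the point. -/

/-- The flow of the linear system `x₁' = -(x₁ + b) + x₂`, `x₂' = -x₂` on the whole plane,
without the restriction to `Ω`, so that orbits can be followed backward in time. -/
noncomputable def fluidFlow (b : ℝ) : Flow ℝ (ℝ × ℝ) where
  toFun t x :=
    (-b + (x.1 + b) * Real.exp (-t) + t * x.2 * Real.exp (-t), x.2 * Real.exp (-t))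
  cont' := by fun_prop
  map_add' s t x := by
    simp only [neg_add, Real.exp_add, Prod.mk.injEq]
    constructor <;> ring
  map_zero' x := by simp

theorem fluidFlow_apply (b t : ℝ) (x : ℝ × ℝ) :
    fluidFlow b t x =
      (-b + (x.1 + b) * Real.exp (-t) + t * x.2 * Real.exp (-t), x.2 * Real.exp (-t)) :=
  rfl

theorem fluidFlow_eq_iff_eq_fluidFlow_neg {b t : ℝ} {x y : ℝ × ℝ} :
    fluidFlow b t x = y ↔ x = fluidFlow b (-t) y :=
  ((fluidFlow b).toHomeomorph t).toEquiv.eq_symm_apply.symm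

theorem fluidFlow_neg_zero_left (b k s : ℝ) :
    fluidFlow b (-s) (0, k) = (-b + (b - s * k) * Real.exp s, k * Real.exp s) := by
  simp only [fluidFlow_apply, neg_neg, Prod.mk.injEq, and_true]
  ring

theorem strictAntiOn_fst_fluidFlow_neg {b k : ℝ} (hk : 0 < k) (hbk : b ≤ k) :
    StrictAntiOn (fun s => (fluidFlow b (-s) (0, k)).1) (Set.Ici 0) := by
  simp only [fluidFlow_neg_zero_left]
  refine strictAntiOn_of_deriv_neg (convex_Ici 0) (by fun_prop) fun s hs => ?_
  rw [interior_Ici] at hs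
  have hderiv : HasDerivAt (fun s => -b + (b - s * k) * Real.exp s)
      ((b - k - s * k) * Real.exp s) s := by
    have hmul := ((hasDerivAt_mul_const k).const_sub b).mul (Real.hasDerivAt_exp s)
    exact (hmul.const_add (-b)).congr_deriv (by ring)
  rw [hderiv.deriv]
  have hsk : 0 < s * k := mul_pos hs hk
  exact mul_neg_of_neg_of_pos (by linarith) (Real.exp_pos s)

theorem strictAntiOn_fst_fluidFlow_neg_div_sqrt {n : ℕ} {β κ : ℝ} (hn : 1 ≤ n) (hκ : 0 < κ)
    (hβκ : β ≤ κ) :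
    StrictAntiOn (fun s => (fluidFlow (β / Real.sqrt n) (-s) (0, κ / Real.sqrt n)).1)
      (Set.Ici 0) := by
  have hsqrt : 0 < Real.sqrt n := Real.sqrt_pos.2 (by exact_mod_cast hn)
  exact strictAntiOn_fst_fluidFlow_neg (div_pos hκ hsqrt)
    (div_le_div_of_nonneg_right hβκ hsqrt.le)

namespace GammaSol

variable {n : ℕ} {β κ x ν η : ℝ}

theorem iff_eq_fluidFlow_neg (hκ : 0 ≤ κ) :
    GammaSol n β κ x ν η ↔
      0 ≤ η ∧ (x, ν) = fluidFlow (β / Real.sqrt n) (-η) (0, κ / Real.sqrt n) := by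
  rw [← fluidFlow_eq_iff_eq_fluidFlow_neg, fluidFlow_apply, Prod.mk.injEq]
  refine ⟨fun h => h.2, fun ⟨hη, hx, hν⟩ => ⟨?_, hη, hx, hν⟩⟩
  have hexp : 0 ≤ ν * Real.exp (-η) := hν ▸ div_nonneg hκ (Real.sqrt_nonneg n)
  have hν₀ : 0 ≤ ν := nonneg_of_mul_nonneg_left hexp (Real.exp_pos _)
  exact hν ▸ mul_le_of_le_one_right hν₀ (Real.exp_le_one_iff.2 (neg_nonpos.2 hη))

theorem nonneg (hκ : 0 ≤ κ) (h : GammaSol n β κ x ν η) : 0 ≤ ν :=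
  (div_nonneg hκ (Real.sqrt_nonneg n)).trans h.1

theorem fluidFlow_of_le (hκ : 0 ≤ κ) (h : GammaSol n β κ x ν η) {t : ℝ} (ht : t ≤ η) :
    GammaSol n β κ (fluidFlow (β / Real.sqrt n) t (x, ν)).1
      (fluidFlow (β / Real.sqrt n) t (x, ν)).2 (η - t) := by
  obtain ⟨-, hxν⟩ := (iff_eq_fluidFlow_neg hκ).1 h
  refine (iff_eq_fluidFlow_neg hκ).2 ⟨sub_nonneg.2 ht, ?_⟩
  rw [hxν, ← Flow.map_add, neg_sub, sub_eq_add_neg]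

theorem nonpos (hn : 1 ≤ n) (hκ : 0 < κ) (hβκ : β ≤ κ) (h : GammaSol n β κ x ν η) : x ≤ 0 := by
  obtain ⟨hη, hxν⟩ := (iff_eq_fluidFlow_neg hκ.le).1 h
  have hle := (strictAntiOn_fst_fluidFlow_neg_div_sqrt hn hκ hβκ).antitoneOn Set.self_mem_Ici hη hη
  simpa only [← hxν, neg_zero, Flow.map_zero_apply] using hle

theorem unique (hn : 1 ≤ n) (hκ : 0 < κ) (hβκ : β ≤ κ) {ν' η' : ℝ} (h : GammaSol n β κ x ν η)
    (h' : GammaSol n β κ x ν' η') : ν = ν' ∧ η = η' := by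
  obtain ⟨hη, hxν⟩ := (iff_eq_fluidFlow_neg hκ.le).1 h
  obtain ⟨hη', hxν'⟩ := (iff_eq_fluidFlow_neg hκ.le).1 h'
  obtain rfl : η = η' := (strictAntiOn_fst_fluidFlow_neg_div_sqrt hn hκ hβκ).injOn hη hη'
    ((Prod.ext_iff.1 hxν).1.symm.trans (Prod.ext_iff.1 hxν').1)
  exact ⟨(Prod.ext_iff.1 hxν).2.trans (Prod.ext_iff.1 hxν').2.symm, rfl⟩

end GammaSol

theorem stmt6_general (n : ℕ) (hn : 1 ≤ n) (β κ : ℝ) (hκ₀ : 0 < κ) (hβκ : β ≤ κ)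
    (νs ηs : ℝ → ℝ)
    (hsol : ∀ x1 ≤ (0 : ℝ), GammaSol n β κ x1 (νs x1) (ηs x1)) :
    ∀ x1 ≤ (0 : ℝ), ∀ t ≤ ηs x1,
      (-(β / Real.sqrt n) + (x1 + β / Real.sqrt n) * Real.exp (-t) +
          t * νs x1 * Real.exp (-t)) ≤ 0 ∧
      0 ≤ νs x1 * Real.exp (-t) ∧
      νs x1 * Real.exp (-t) =
        νs (-(β / Real.sqrt n) + (x1 + β / Real.sqrt n) * Real.exp (-t) +
          t * νs x1 * Real.exp (-t)) := by
  intro x1 hx1 t ht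
  have hpoint := (hsol x1 hx1).fluidFlow_of_le hκ₀.le ht
  have hle := hpoint.nonpos hn hκ₀ hβκ
  exact ⟨hle, hpoint.nonneg hκ₀.le, (hpoint.unique hn hκ₀ hβκ (hsol _ hle)).1⟩

/-- Lemma `gamma`, second claim.  Let `(ν*(x₁), η*(x₁))` denote the
(unique) solution of the nonlinear system for each `x₁ ≤ 0`.  Then for every `x₁ ≤ 0`
and every `t ∈ [0, η*(x₁)]`, the point
`(-β/√n + (x₁ + β/√n)e^{-t} + t ν*(x₁) e^{-t}, ν*(x₁) e^{-t})`
lies on the curve `Γ^{(κ)} = {x ∈ Ω : x₂ = ν*(x₁)}`: it belongs to `Ω` and its second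
coordinate equals `ν*` evaluated at its first coordinate. -/
theorem stmt6 (n : ℕ) (hn : 1 ≤ n) (β κ : ℝ) (hβ : 0 < β) (hκ : β ≤ κ)
    (νs ηs : ℝ → ℝ)
    (hsol : ∀ x1 ≤ (0 : ℝ), GammaSol n β κ x1 (νs x1) (ηs x1)) :
    ∀ x1 ≤ (0 : ℝ), ∀ t ∈ Set.Icc (0 : ℝ) (ηs x1),
      (-(β / Real.sqrt n) + (x1 + β / Real.sqrt n) * Real.exp (-t) +
          t * νs x1 * Real.exp (-t)) ≤ 0 ∧
      0 ≤ νs x1 * Real.exp (-t) ∧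
      νs x1 * Real.exp (-t) =
        νs (-(β / Real.sqrt n) + (x1 + β / Real.sqrt n) * Real.exp (-t) +
          t * νs x1 * Real.exp (-t)) :=
  fun x1 hx1 t ht => stmt6_general n hn β κ (hβ.trans_le hκ) hκ νs ηs hsol x1 hx1 t ht.2
end

section
/- Fix κ ≥ β. If x ∈ Ω satisfies x > Γ^(κ), then τ(x) < ∞ and x_2·e^{−τ(x)} > κ/√n; and if x ∈ Γ^(κ), then τ(x) < ∞ and x_2·e^{−τ(x)} = κ/√n. -/
/-- `η` solves the hitting-time equation `β/√n - (x₁ + β/√n)e^{-η} - η x₂ e^{-η} = 0`. -/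
def HitEq (n : ℕ) (β x1 x2 η : ℝ) : Prop :=
  β / Real.sqrt n - (x1 + β / Real.sqrt n) * Real.exp (-η) -
      η * x2 * Real.exp (-η) = 0

/-!
Multiplied by `e^η`, the hitting-time equation says that `g(η) = b e^η - η x₂`, with `b = β/√n`,
takes the value `x₁ + b`. Since `g' = b e^η - x₂` and `x₂ > 0`, a solution with `b ≤ x₂ e^{-η}` has
`g` strictly decreasing to its left, so it is the smallest one. On the curve, `η*(x₁)` is such a
solution because `x₂ e^{-η*} = κ/√n ≥ b`. Above the curve `g` is smaller, so
`g(η*) ≤ x₁ + b ≤ g(0)` and the intermediate value theorem gives a solution `η ≤ η*`; moving up in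
`x₂` and back in `η` only increases `x₂ e^{-η}`.
-/

theorem strictAntiOn_mul_exp_sub_mul {b x s : ℝ} (hx : 0 < x) (hs : b * Real.exp s ≤ x) :
    StrictAntiOn (fun t ↦ b * Real.exp t - t * x) (Set.Iic s) := by
  refine strictAntiOn_of_hasDerivWithinAt_neg (f' := fun t ↦ b * Real.exp t - 1 * x)
    (convex_Iic s) (by fun_prop) (fun t _ ↦ ?_) fun t ht ↦ ?_
  · exact (((Real.hasDerivAt_exp t).const_mul b).sub
      ((hasDerivAt_id t).mul_const x)).hasDerivWithinAt
  · rw [interior_Iic, Set.mem_Iio] at ht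
    have hlt : b * Real.exp t < x := calc
      b * Real.exp t = b * Real.exp s * Real.exp (t - s) := by
        rw [mul_assoc, ← Real.exp_add, add_sub_cancel]
      _ ≤ x * Real.exp (t - s) := by gcongr
      _ < x := mul_lt_of_lt_one_right hx (Real.exp_lt_one_iff.2 (sub_neg.2 ht))
    linarith

theorem hitEq_iff {n : ℕ} {β x1 x2 η : ℝ} :
    HitEq n β x1 x2 η ↔
      β / Real.sqrt n * Real.exp η - η * x2 = x1 + β / Real.sqrt n := by
  have hfactor : β / Real.sqrt n - (x1 + β / Real.sqrt n) * Real.exp (-η) -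
      η * x2 * Real.exp (-η) =
        (β / Real.sqrt n * Real.exp η - η * x2 - (x1 + β / Real.sqrt n)) * Real.exp (-η) := by
    rw [Real.exp_neg]
    field_simp
    ring
  rw [HitEq, hfactor, mul_eq_zero, or_iff_left (Real.exp_ne_zero _), sub_eq_zero]

theorem GammaSol.hitEq {n : ℕ} {β κ x1 ν η : ℝ} (h : GammaSol n β κ x1 ν η) :
    HitEq n β x1 ν η := by
  obtain ⟨-, -, heq, -⟩ := h
  unfold HitEq
  linarith

theorem HitEq.le_of_le_mul_exp_neg {n : ℕ} {β x1 x2 η η' : ℝ} (h : HitEq n β x1 x2 η)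
    (h' : HitEq n β x1 x2 η') (hx2 : 0 < x2)
    (hle : β / Real.sqrt n ≤ x2 * Real.exp (-η)) : η ≤ η' := by
  rw [Real.exp_neg, ← div_eq_mul_inv, le_div_iff₀ (Real.exp_pos η)] at hle
  by_contra! hlt
  exact (strictAntiOn_mul_exp_sub_mul hx2 hle hlt.le Set.self_mem_Iic hlt).ne
    ((hitEq_iff.1 h).trans (hitEq_iff.1 h').symm)

theorem HitEq.exists_mem_Icc_of_le {n : ℕ} {β x1 ν x2 η₀ : ℝ} (h : HitEq n β x1 ν η₀)
    (hη₀ : 0 ≤ η₀) (hx1 : x1 ≤ 0) (hle : ν ≤ x2) :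
    ∃ η ∈ Set.Icc 0 η₀, HitEq n β x1 x2 η := by
  simp only [hitEq_iff] at h ⊢
  have hright : β / Real.sqrt n * Real.exp η₀ - η₀ * x2 ≤ x1 + β / Real.sqrt n := by
    rw [← h]
    gcongr
  have hleft : x1 + β / Real.sqrt n ≤ β / Real.sqrt n * Real.exp 0 - 0 * x2 := by
    simpa using hx1
  exact intermediate_value_Icc' (f := fun η ↦ β / Real.sqrt n * Real.exp η - η * x2) hη₀
    (by fun_prop) ⟨hright, hleft⟩

theorem stmt7_general {n : ℕ} (hn : 1 ≤ n) {β κ x1 ν η₀ : ℝ} (hκ₀ : 0 < κ) (hκ : β ≤ κ)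
    (hx1 : x1 ≤ 0) (hγ : GammaSol n β κ x1 ν η₀) (x2 : ℝ) :
    (ν < x2 →
      ∃ η : ℝ, 0 ≤ η ∧ HitEq n β x1 x2 η ∧
        (∀ η' : ℝ, 0 ≤ η' → HitEq n β x1 x2 η' → η ≤ η') ∧
        κ / Real.sqrt n < x2 * Real.exp (-η)) ∧
    (x2 = ν →
      ∃ η : ℝ, 0 ≤ η ∧ HitEq n β x1 x2 η ∧
        (∀ η' : ℝ, 0 ≤ η' → HitEq n β x1 x2 η' → η ≤ η') ∧
        x2 * Real.exp (-η) = κ / Real.sqrt n) := by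
  have hhit := hγ.hitEq
  obtain ⟨hν, hη₀, -, hend⟩ := hγ
  have hβκ : β / Real.sqrt n ≤ κ / Real.sqrt n := by gcongr
  have hνpos : 0 < ν := lt_of_lt_of_le (by positivity) hν
  constructor
  · intro hlt
    have hx2 : 0 < x2 := hνpos.trans hlt
    obtain ⟨η, ⟨hη, hηη₀⟩, hroot⟩ := hhit.exists_mem_Icc_of_le hη₀ hx1 hlt.le
    have habove : κ / Real.sqrt n < x2 * Real.exp (-η) := calc
      κ / Real.sqrt n = ν * Real.exp (-η₀) := hend.symm
      _ < x2 * Real.exp (-η₀) := by gcongr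
      _ ≤ x2 * Real.exp (-η) := by gcongr
    exact ⟨η, hη, hroot,
      fun η' _ hroot' ↦ hroot.le_of_le_mul_exp_neg hroot' hx2 (hβκ.trans habove.le), habove⟩
  · rintro rfl
    exact ⟨η₀, hη₀, hhit,
      fun η' _ hroot' ↦ hhit.le_of_le_mul_exp_neg hroot' hνpos (hβκ.trans hend.ge), hend⟩

/-- Lemma `tau`, part 1.  Fix `κ ≥ β` and let `ν*` parametrize the curve
`Γ^{(κ)}`.  For `x ∈ Ω`: if `x > Γ^{(κ)}` (i.e. `x₂ > ν*(x₁)`) then `τ(x) < ∞` — the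
smallest nonnegative solution `η` of the hitting-time equation exists — and
`x₂ e^{-τ(x)} > κ/√n`; and if `x ∈ Γ^{(κ)}` (i.e. `x₂ = ν*(x₁)`) then `τ(x) < ∞` and
`x₂ e^{-τ(x)} = κ/√n`. -/
theorem stmt7 (n : ℕ) (hn : 1 ≤ n) (β κ : ℝ) (hβ : 0 < β) (hκ : β ≤ κ)
    (νs : ℝ → ℝ)
    (hνs : ∀ x1 ≤ (0 : ℝ), ∃ η : ℝ, GammaSol n β κ x1 (νs x1) η) :
    ∀ x1 ≤ (0 : ℝ), ∀ x2 : ℝ, 0 ≤ x2 →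
      (νs x1 < x2 →
        ∃ η : ℝ, 0 ≤ η ∧ HitEq n β x1 x2 η ∧
          (∀ η' : ℝ, 0 ≤ η' → HitEq n β x1 x2 η' → η ≤ η') ∧
          κ / Real.sqrt n < x2 * Real.exp (-η)) ∧
      (x2 = νs x1 →
        ∃ η : ℝ, 0 ≤ η ∧ HitEq n β x1 x2 η ∧
          (∀ η' : ℝ, 0 ≤ η' → HitEq n β x1 x2 η' → η ≤ η') ∧
          x2 * Real.exp (-η) = κ / Real.sqrt n) := by
  intro x1 hx1 x2 _
  obtain ⟨η₀, hγ⟩ := hνs x1 hx1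
  exact stmt7_general hn (hβ.trans_le hκ) hκ hx1 hγ x2
end

section
/- Fix κ > β. The function τ is differentiable at every point x ∈ Ω with x ≥ Γ^(κ) (with the derivative in x_1 understood as the left derivative when x_1 = 0), and its partial derivatives satisfy τ_1(x) = −e^{−τ(x)}/(x_2·e^{−τ(x)} − β/√n) ≤ 0 and τ_2(x) = τ_1(x)·τ(x) ≤ 0. -/
/-
Multiplied by `e ^ η`, the hitting-time equation becomes `g x η = 0` with
`g x η = b (e ^ η - 1) - η x₂ - x₁` and `b = β / √n`. On the interval where `b e ^ η < x₂` the
function `g x` is strictly decreasing, and `g x 0 = -x₁ ≥ 0`. If `0` lies in this interval, a zero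
in it is therefore nonnegative and is the first hitting time; at and above the curve, `0` and such
a zero do lie in it. Both memberships are open conditions on `(x, η)`, so near such a point, within
`x₁ ≤ 0`, the first hitting time is the implicit function of `g x η = 0`. Its total derivative is
`(b e ^ τ - x₂)⁻¹ (dx₁ + τ dx₂)`, which contains both partial derivatives.
-/

open Filter Function Set
open scoped Topology

section Calculus

variable {𝕜 E : Type*} [NontriviallyNormedField 𝕜] [NormedAddCommGroup E] [NormedSpace 𝕜 E]

theorem exists_implicitFunction_hasStrictFDerivAt [CompleteSpace 𝕜] [CompleteSpace E]
    {f : E × 𝕜 → 𝕜} {L : E →L[𝕜] 𝕜} {c : 𝕜} {u : E × 𝕜}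
    (hf : HasStrictFDerivAt f (L.coprod (c • .id 𝕜 𝕜)) u) (hc : c ≠ 0) :
    ∃ φ : E → 𝕜, HasStrictFDerivAt φ (-(c⁻¹ • L)) u.1 ∧ φ u.1 = u.2 ∧
      ∀ᶠ x in 𝓝 u.1, f (x, φ x) = f u := by
  let e : 𝕜 ≃L[𝕜] 𝕜 := ContinuousLinearEquiv.unitsEquivAut 𝕜 (Units.mk0 c hc)
  have he : L.coprod (c • .id 𝕜 𝕜) ∘L .inr 𝕜 E 𝕜 = e := by
    ext; simp [e]
  have hinv : (L.coprod (c • .id 𝕜 𝕜) ∘L .inr 𝕜 E 𝕜).IsInvertible := ⟨e, he.symm⟩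
  have hderiv : -(L.coprod (c • .id 𝕜 𝕜) ∘L .inr 𝕜 E 𝕜).inverse ∘L
      (L.coprod (c • .id 𝕜 𝕜) ∘L .inl 𝕜 E 𝕜) = -(c⁻¹ • L) := by
    rw [he, ContinuousLinearMap.inverse_equiv]
    ext v
    simp [e, mul_comm]
  exact ⟨hf.implicitFunctionOfProdDomain hinv,
    hderiv ▸ hf.hasStrictFDerivAt_implicitFunctionOfProdDomain hinv,
    (hf.eventually_apply_eq_iff_implicitFunctionOfProdDomain hinv).self_of_nhds.mp rfl,
    hf.eventually_apply_implicitFunctionOfProdDomain hinv⟩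

variable {f : 𝕜 → 𝕜 → E} {L : 𝕜 × 𝕜 →L[𝕜] E} {s : Set 𝕜} {x y : 𝕜}

theorem hasDerivWithinAt_left_of_hasFDerivWithinAt_uncurry
    (h : HasFDerivWithinAt (uncurry f) L (s ×ˢ univ) (x, y)) :
    HasDerivWithinAt (fun t => f t y) (L (1, 0)) s x :=
  h.comp_hasDerivWithinAt (f := fun t => (t, y)) x
    ((hasDerivWithinAt_id x s).prodMk (hasDerivWithinAt_const x s y)) fun _ ht => ⟨ht, mem_univ _⟩

theorem hasDerivAt_right_of_hasFDerivWithinAt_uncurry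
    (h : HasFDerivWithinAt (uncurry f) L (s ×ˢ univ) (x, y)) (hx : x ∈ s) :
    HasDerivAt (f x) (L (0, 1)) y :=
  h.comp_hasDerivAt (f := fun t => (x, t)) y ((hasDerivAt_const y x).prodMk (hasDerivAt_id y))
    (.of_forall fun _ => ⟨hx, mem_univ _⟩)

end Calculus

section FirstHit

theorem neg_exp_neg_div_eq_inv (a b t : ℝ) :
    -Real.exp (-t) / (a * Real.exp (-t) - b) = (b * Real.exp t - a)⁻¹ := by
  have hfactor : a * Real.exp (-t) - b = -Real.exp (-t) * (b * Real.exp t - a) := by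
    have hexp : Real.exp (-t) * Real.exp t = 1 := by
      rw [← Real.exp_add, neg_add_cancel, Real.exp_zero]
    linear_combination b * hexp
  rw [hfactor, div_mul_cancel_left₀ (neg_ne_zero.2 (Real.exp_ne_zero _))]

/-- The left-hand side of the hitting-time equation at the point `x`, multiplied by `e ^ η` so that
it is affine in `x`; `b` stands for `β / √n`. -/
noncomputable def hitGap (b : ℝ) (x : ℝ × ℝ) (η : ℝ) : ℝ :=
  b * (Real.exp η - 1) - η * x.2 - x.1

/-- The nonnegative solutions of the hitting-time equation at `x`; the first hitting time `τ x` is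
the least element of this set. -/
def hittingTimes (b : ℝ) (x : ℝ × ℝ) : Set ℝ :=
  {η | 0 ≤ η ∧ hitGap b x η = 0}

/-- The interval of those `η` at which the derivative `b e ^ η - c` of `hitGap b x` is negative,
where `c = x.2`. -/
def descentSet (b c : ℝ) : Set ℝ :=
  {η | b * Real.exp η < c}

variable {b c η T : ℝ} {x : ℝ × ℝ}

theorem zero_mem_descentSet_iff : 0 ∈ descentSet b c ↔ b < c := by
  simp [descentSet]

theorem hitGap_zero_right (b : ℝ) (x : ℝ × ℝ) : hitGap b x 0 = -x.1 := by
  simp [hitGap]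

theorem ordConnected_descentSet (b c : ℝ) : (descentSet b c).OrdConnected := by
  rcases le_total 0 b with hb | hb
  · exact ordConnected_Iio.preimage_mono (Real.exp_monotone.const_mul hb)
  · exact ordConnected_Iio.preimage_anti (Real.exp_monotone.const_mul_of_nonpos hb)

theorem hasDerivAt_hitGap (b : ℝ) (x : ℝ × ℝ) (η : ℝ) :
    HasDerivAt (hitGap b x) (b * Real.exp η - x.2) η := by
  unfold hitGap
  simpa using ((((Real.hasDerivAt_exp η).sub_const 1).const_mul b).fun_sub
    ((hasDerivAt_id η).mul_const x.2)).sub_const x.1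

theorem continuous_hitGap (b : ℝ) (x : ℝ × ℝ) : Continuous (hitGap b x) :=
  continuous_iff_continuousAt.2 fun η => (hasDerivAt_hitGap b x η).continuousAt

theorem strictAntiOn_hitGap (b : ℝ) (x : ℝ × ℝ) :
    StrictAntiOn (hitGap b x) (descentSet b x.2) := by
  refine strictAntiOn_of_deriv_neg (ordConnected_descentSet b x.2).convex
    (continuous_hitGap b x).continuousOn fun η hη => ?_
  rw [(hasDerivAt_hitGap b x η).deriv]
  exact sub_neg.2 (interior_subset (s := descentSet b x.2) hη)

theorem isLeast_hittingTimes (hx : x.1 ≤ 0) (h0 : 0 ∈ descentSet b x.2)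
    (hη : η ∈ descentSet b x.2) (hgap : hitGap b x η = 0) : IsLeast (hittingTimes b x) η := by
  have hanti := strictAntiOn_hitGap b x
  have hη0 : 0 ≤ η := by
    rw [← hanti.le_iff_ge hη h0, hgap, hitGap_zero_right]
    exact neg_nonneg.2 hx
  refine ⟨⟨hη0, hgap⟩, fun η' ⟨hη'0, hgap'⟩ => le_of_not_gt fun hlt => ?_⟩
  have hη' : η' ∈ descentSet b x.2 :=
    (ordConnected_descentSet b x.2).out h0 hη ⟨hη'0, hlt.le⟩
  exact (hanti hη' hη hlt).ne (hgap.trans hgap'.symm)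

theorem exists_hitGap_eq_zero_mem_descentSet (hx : x.1 ≤ 0) (h0 : 0 ∈ descentSet b x.2)
    (hη : η ∈ descentSet b x.2) (hη0 : 0 ≤ η) (hgap : hitGap b x η ≤ 0) :
    ∃ T ∈ descentSet b x.2, hitGap b x T = 0 := by
  have hzero : 0 ≤ hitGap b x 0 := by
    rw [hitGap_zero_right]
    exact neg_nonneg.2 hx
  obtain ⟨T, hT, hgapT⟩ :=
    intermediate_value_Icc' hη0 (continuous_hitGap b x).continuousOn ⟨hgap, hzero⟩
  exact ⟨T, (ordConnected_descentSet b x.2).out h0 hη hT, hgapT⟩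

theorem hasStrictFDerivAt_hitGap (b : ℝ) (x : ℝ × ℝ) (η : ℝ) :
    HasStrictFDerivAt (uncurry (hitGap b))
      ((-(.fst ℝ ℝ ℝ + η • .snd ℝ ℝ ℝ) : ℝ × ℝ →L[ℝ] ℝ).coprod
        ((b * Real.exp η - x.2) • .id ℝ ℝ)) (x, η) := by
  have hfst := hasStrictFDerivAt_fst (𝕜 := ℝ) (p := (x, η))
  have hsnd := hasStrictFDerivAt_snd (𝕜 := ℝ) (p := (x, η))
  refine ((((hsnd.exp.sub_const 1).const_mul b).fun_sub (hsnd.fun_mul hfst.snd)).fun_sub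
    hfst.fst).congr_fderiv ?_
  ext <;> simp

theorem eventually_mem_descentSet {φ : ℝ × ℝ → ℝ} (hφ : ContinuousAt φ x)
    (hx : φ x ∈ descentSet b x.2) : ∀ᶠ y in 𝓝 x, φ y ∈ descentSet b y.2 :=
  (continuousAt_const.mul hφ.rexp).eventually_lt continuousAt_snd hx

theorem hasFDerivWithinAt_firstHit {τ : ℝ × ℝ → ℝ}
    (hτ : ∀ y η, IsLeast (hittingTimes b y) η → τ y = η) (hx : x.1 ≤ 0)
    (h0 : 0 ∈ descentSet b x.2) (hT : T ∈ descentSet b x.2) (hgap : hitGap b x T = 0) :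
    HasFDerivWithinAt τ ((b * Real.exp T - x.2)⁻¹ • (.fst ℝ ℝ ℝ + T • .snd ℝ ℝ ℝ))
      (Iic 0 ×ˢ univ) x := by
  obtain ⟨φ, hφ, hφx, hφgap⟩ := exists_implicitFunction_hasStrictFDerivAt
    (hasStrictFDerivAt_hitGap b x T) (sub_neg.2 hT).ne
  rw [smul_neg, neg_neg] at hφ
  have hφT : φ x ∈ descentSet b x.2 := by rwa [hφx]
  have hτφ : ∀ᶠ y in 𝓝 x, y.1 ≤ 0 → τ y = φ y := by
    filter_upwards [hφgap, eventually_mem_descentSet continuousAt_const h0,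
      eventually_mem_descentSet hφ.continuousAt hφT] with y hgap_y h0y hφy hy
    exact hτ y (φ y) (isLeast_hittingTimes hy h0y hφy (hgap_y.trans hgap))
  refine hφ.hasFDerivAt.hasFDerivWithinAt.congr_of_eventuallyEq ?_ (hτφ.self_of_nhds hx)
  filter_upwards [nhdsWithin_le_nhds hτφ, self_mem_nhdsWithin] with y hy hmem using hy hmem.1

end FirstHit

section Curve

variable {n : ℕ} {β κ x1 x2 ν η : ℝ}

theorem hitEq_iff_hitGap_eq_zero :
    HitEq n β x1 x2 η ↔ hitGap (β / Real.sqrt n) (x1, x2) η = 0 := by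
  have hexp : Real.exp η * Real.exp (-η) = 1 := by
    rw [← Real.exp_add, add_neg_cancel, Real.exp_zero]
  have hmul : hitGap (β / Real.sqrt n) (x1, x2) η = Real.exp η *
      (β / Real.sqrt n - (x1 + β / Real.sqrt n) * Real.exp (-η) - η * x2 * Real.exp (-η)) := by
    unfold hitGap
    linear_combination (x1 + β / Real.sqrt n + η * x2) * hexp
  rw [hmul, mul_eq_zero_iff_left (Real.exp_ne_zero η), HitEq]

theorem isLeast_hittingTimes_iff :
    IsLeast (hittingTimes (β / Real.sqrt n) (x1, x2)) η ↔
      (0 ≤ η ∧ HitEq n β x1 x2 η) ∧ ∀ η', 0 ≤ η' → HitEq n β x1 x2 η' → η ≤ η' := by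
  simp only [hitEq_iff_hitGap_eq_zero, IsLeast, hittingTimes, mem_lowerBounds, mem_ofPred_eq,
    and_imp]

namespace GammaSol

theorem eq_mul_exp (h : GammaSol n β κ x1 ν η) : ν = κ / Real.sqrt n * Real.exp η := by
  rw [← h.2.2.2, mul_assoc, ← Real.exp_add, neg_add_cancel, Real.exp_zero, mul_one]

theorem hitGap_nonpos (h : GammaSol n β κ x1 ν η) (hν : ν ≤ x2) :
    hitGap (β / Real.sqrt n) (x1, x2) η ≤ 0 := by
  obtain ⟨-, hη, hsol, -⟩ := h
  have hcurve : hitGap (β / Real.sqrt n) (x1, ν) η = 0 :=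
    hitEq_iff_hitGap_eq_zero.1 (by unfold HitEq; linarith)
  have hmono : η * ν ≤ η * x2 := mul_le_mul_of_nonneg_left hν hη
  unfold hitGap at hcurve ⊢
  linarith

theorem zero_mem_descentSet (h : GammaSol n β κ x1 ν η) (hκ : β / Real.sqrt n < κ / Real.sqrt n)
    (hν : ν ≤ x2) : 0 ∈ descentSet (β / Real.sqrt n) x2 :=
  zero_mem_descentSet_iff.2 (hκ.trans_le (h.1.trans hν))

theorem mem_descentSet (h : GammaSol n β κ x1 ν η) (hκ : β / Real.sqrt n < κ / Real.sqrt n)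
    (hν : ν ≤ x2) : η ∈ descentSet (β / Real.sqrt n) x2 :=
  calc β / Real.sqrt n * Real.exp η < κ / Real.sqrt n * Real.exp η :=
        mul_lt_mul_of_pos_right hκ (Real.exp_pos η)
    _ = ν := h.eq_mul_exp.symm
    _ ≤ x2 := hν

end GammaSol

end Curve

theorem stmt8_general (n : ℕ) (hn : 1 ≤ n) (β κ : ℝ) (hκ : β < κ)
    (νs : ℝ → ℝ)
    (hνs : ∀ x1 ≤ (0 : ℝ), ∃ η : ℝ, GammaSol n β κ x1 (νs x1) η)
    (tau : ℝ → ℝ → ℝ)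
    (htau : ∀ x1 x2 η : ℝ, 0 ≤ η → HitEq n β x1 x2 η →
      (∀ η' : ℝ, 0 ≤ η' → HitEq n β x1 x2 η' → η ≤ η') → tau x1 x2 = η) :
    ∀ x1 ≤ (0 : ℝ), ∀ x2 : ℝ, νs x1 ≤ x2 →
      ∀ T T1 : ℝ, T = tau x1 x2 →
        T1 = -Real.exp (-T) / (x2 * Real.exp (-T) - β / Real.sqrt n) →
        HasDerivWithinAt (fun t => tau t x2) T1 (Set.Iic 0) x1 ∧
        (x1 < 0 → HasDerivAt (fun t => tau t x2) T1 x1) ∧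
        T1 ≤ 0 ∧
        HasDerivAt (fun t => tau x1 t) (T1 * T) x2 ∧
        T1 * T ≤ 0 := by
  intro x1 hx1 x2 hx2 T T1 hT hT1
  obtain ⟨η, hη⟩ := hνs x1 hx1
  have hlt : β / Real.sqrt n < κ / Real.sqrt n :=
    div_lt_div_of_pos_right hκ (Real.sqrt_pos.2 (by exact_mod_cast hn))
  have h0 := hη.zero_mem_descentSet hlt hx2
  obtain ⟨S, hS, hgap⟩ := exists_hitGap_eq_zero_mem_descentSet (x := (x1, x2)) hx1 h0
    (hη.mem_descentSet hlt hx2) hη.2.1 (hη.hitGap_nonpos hx2)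
  have hfirst : ∀ y t, IsLeast (hittingTimes (β / Real.sqrt n) y) t → uncurry tau y = t := by
    intro y t ht
    obtain ⟨⟨ht0, hteq⟩, hmin⟩ := isLeast_hittingTimes_iff.1 ht
    exact htau y.1 y.2 t ht0 hteq hmin
  have hleast := isLeast_hittingTimes hx1 h0 hS hgap
  obtain rfl : T = S := hT.trans (hfirst _ _ hleast)
  rw [neg_exp_neg_div_eq_inv] at hT1
  have hT1_nonpos : T1 ≤ 0 := hT1 ▸ inv_nonpos.2 (sub_neg.2 hS).le
  have hderiv := hasFDerivWithinAt_firstHit hfirst hx1 h0 hS hgap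
  have hleft : HasDerivWithinAt (fun t => tau t x2) T1 (Iic 0) x1 := by
    simpa [hT1] using hasDerivWithinAt_left_of_hasFDerivWithinAt_uncurry hderiv
  have hright : HasDerivAt (fun t => tau x1 t) (T1 * T) x2 := by
    simpa [hT1] using hasDerivAt_right_of_hasFDerivWithinAt_uncurry hderiv hx1
  exact ⟨hleft, fun hneg => hleft.hasDerivAt (Iic_mem_nhds hneg), hT1_nonpos, hright,
    mul_nonpos_of_nonpos_of_nonneg hT1_nonpos hleast.1.1⟩

/-- Lemma `tau`, part 2.  Fix `κ > β`, let `ν*` parametrize `Γ^{(κ)}` and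
let `τ` be the first hitting time: `τ(x)` is the smallest nonnegative solution of the
hitting-time equation wherever such a smallest solution exists (hypothesis `htau`).
Then `τ` is differentiable at every `x ∈ Ω` with `x ≥ Γ^{(κ)}` — the derivative in `x₁`
being the left (within `(-∞,0]`) derivative when `x₁ = 0` and the ordinary derivative
when `x₁ < 0` — with
`τ₁(x) = -e^{-τ(x)}/(x₂ e^{-τ(x)} - β/√n) ≤ 0` and `τ₂(x) = τ₁(x) τ(x) ≤ 0`. -/
theorem stmt8 (n : ℕ) (hn : 1 ≤ n) (β κ : ℝ) (hβ : 0 < β) (hκ : β < κ)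
    (νs : ℝ → ℝ)
    (hνs : ∀ x1 ≤ (0 : ℝ), ∃ η : ℝ, GammaSol n β κ x1 (νs x1) η)
    (tau : ℝ → ℝ → ℝ)
    (htau : ∀ x1 x2 η : ℝ, 0 ≤ η → HitEq n β x1 x2 η →
      (∀ η' : ℝ, 0 ≤ η' → HitEq n β x1 x2 η' → η ≤ η') → tau x1 x2 = η) :
    ∀ x1 ≤ (0 : ℝ), ∀ x2 : ℝ, νs x1 ≤ x2 →
      ∀ T T1 : ℝ, T = tau x1 x2 →
        T1 = -Real.exp (-T) / (x2 * Real.exp (-T) - β / Real.sqrt n) →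
        HasDerivWithinAt (fun t => tau t x2) T1 (Set.Iic 0) x1 ∧
        (x1 < 0 → HasDerivAt (fun t => tau t x2) T1 x1) ∧
        T1 ≤ 0 ∧
        HasDerivAt (fun t => tau x1 t) (T1 * T) x2 ∧
        T1 * T ≤ 0 :=
  stmt8_general n hn β κ hκ νs hνs tau htau
end
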